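/- arXiv:math/9710221 — 9 statements merged into one kernel-verified Lean document; each statement's English description precedes it below -/
import Mathlib

section
/- Let f : ℝ → ℝ be a C^∞ function and let k ∈ ℕ with k ≥ 2. For j ∈ ℕ and α ∈ ℝ define I_j(α) = ∫₀^π f(t+α)·(sin t)^j dt. Then the function I_k is twice differentiable on ℝ and for every α ∈ ℝ one has I_k''(α) + k²·I_k(α) = k·(k−1)·I_{k−2}(α). -/
open Real intervalIntegral

lemma aux_deriv (g g' : ℝ → ℝ) (hg : ∀ x, HasDerivAt g (g' x) x) (hg' : Continuous g') (k : ℕ)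
    (α : ℝ) :
    HasDerivAt (fun a => ∫ t in (0:ℝ)..π, g (t + a) * Real.sin t ^ k)
      (∫ t in (0:ℝ)..π, g' (t + α) * Real.sin t ^ k) α := by
  have hgc : Continuous g := continuous_iff_continuousAt.2 fun x => (hg x).continuousAt
  obtain ⟨C, hC⟩ := (isCompact_Icc (a := α - 1) (b := π + α + 1)).exists_bound_of_continuousOn
    hg'.continuousOn
  refine (intervalIntegral.hasDerivAt_integral_of_dominated_loc_of_deriv_le (bound := fun _ => C)
    (F := fun a t => g (t + a) * Real.sin t ^ k) (F' := fun a t => g' (t + a) * Real.sin t ^ k)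
    (Metric.ball_mem_nhds α one_pos) ?_ ?_ ?_ ?_ ?_ ?_).2
  · refine Filter.Eventually.of_forall fun a => Continuous.aestronglyMeasurable ?_
    fun_prop
  · apply Continuous.intervalIntegrable
    fun_prop
  · refine Continuous.aestronglyMeasurable ?_
    fun_prop
  · refine Filter.Eventually.of_forall fun t ht a ha => ?_
    rw [Set.uIoc_of_le pi_pos.le] at ht
    rw [Metric.mem_ball, Real.dist_eq, abs_lt] at ha
    have h1 := hC (t + a) ⟨by linarith [ht.1], by linarith [ht.2]⟩
    rw [norm_mul, norm_pow]
    have h2 : ‖Real.sin t‖ ^ k ≤ 1 := pow_le_one₀ (norm_nonneg _) (abs_sin_le_one t)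
    exact (mul_le_of_le_one_right (norm_nonneg _) h2).trans h1
  · exact intervalIntegrable_const
  · refine Filter.Eventually.of_forall fun t ht a ha => ?_
    exact ((hg (t + a)).comp_const_add t a).mul_const _

/-- Recursion relation `I_k'' + k² I_k = k(k-1) I_{k-2}` for the shifted weighted
integrals `I_j(α) = ∫₀^π f(t+α) (sin t)^j dt` of a smooth function `f`. -/
theorem recursion_for_weighted_integrals
    (f : ℝ → ℝ) (hf : ContDiff ℝ (⊤ : ℕ∞) f) (k : ℕ) (hk : 2 ≤ k)
    (I : ℕ → ℝ → ℝ)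
    (hI : ∀ j α, I j α = ∫ t in (0:ℝ)..π, f (t + α) * Real.sin t ^ j) :
    Differentiable ℝ (I k) ∧ Differentiable ℝ (deriv (I k)) ∧
      ∀ α : ℝ, deriv (deriv (I k)) α + (k : ℝ) ^ 2 * I k α
        = (k : ℝ) * ((k : ℝ) - 1) * I (k - 2) α := by
  have hf1 : ContDiff ℝ (⊤ : ℕ∞) (deriv f) := (contDiff_infty_iff_deriv.1 hf).2
  have hf2 : ContDiff ℝ (⊤ : ℕ∞) (deriv (deriv f)) := (contDiff_infty_iff_deriv.1 hf1).2
  have d0 : ∀ x, HasDerivAt f (deriv f x) x := fun x =>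
    ((contDiff_infty_iff_deriv.1 hf).1 x).hasDerivAt
  have d1 : ∀ x, HasDerivAt (deriv f) (deriv (deriv f) x) x := fun x =>
    ((contDiff_infty_iff_deriv.1 hf1).1 x).hasDerivAt
  have c0 := hf.continuous
  have c1 := hf1.continuous
  have c2 := hf2.continuous
  have e0 : I k = fun a => ∫ t in (0:ℝ)..π, f (t + a) * Real.sin t ^ k := funext (hI k)
  have D0 := aux_deriv f _ d0 c1 k
  have D1 := aux_deriv _ _ d1 c2 k
  rw [← e0] at D0
  have e1 : deriv (I k) = fun a => ∫ t in (0:ℝ)..π, deriv f (t + a) * Real.sin t ^ k :=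
    funext fun a => (D0 a).deriv
  rw [← e1] at D1
  refine ⟨fun a => (D0 a).differentiableAt, fun a => (D1 a).differentiableAt, fun α => ?_⟩
  rw [(D1 α).deriv, hI, hI]
  obtain ⟨m, rfl⟩ := Nat.exists_eq_add_of_le' hk
  simp only [Nat.add_sub_cancel]
  have key := integral_eq_sub_of_hasDerivAt (a := 0) (b := π)
    (f := fun t => deriv f (t + α) * Real.sin t ^ (m + 2)
      - f (t + α) * (((m : ℝ) + 2) * (Real.sin t ^ (m + 1) * Real.cos t)))
    (f' := fun t => deriv (deriv f) (t + α) * Real.sin t ^ (m + 2)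
      + ((m : ℝ) + 2) ^ 2 * (f (t + α) * Real.sin t ^ (m + 2))
      - ((m : ℝ) + 2) * ((m : ℝ) + 1) * (f (t + α) * Real.sin t ^ m))
    (by
      intro t _
      have s := Real.hasDerivAt_sin t
      have A := ((d1 (t + α)).comp_add_const t α).mul (s.pow (m + 2))
      have B := ((d0 (t + α)).comp_add_const t α).mul
        (((s.pow (m + 1)).mul (Real.hasDerivAt_cos t)).const_mul ((m : ℝ) + 2))
      refine (A.sub B).congr_deriv ?_
      have hc : Real.cos t ^ 2 = 1 - Real.sin t ^ 2 := Real.cos_sq' t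
      simp only [Pi.pow_apply, Pi.mul_apply, Nat.add_sub_cancel, Nat.add_succ_sub_one]
      push_cast
      linear_combination (-(f (t + α) * ((m : ℝ) + 2) * ((m : ℝ) + 1) * Real.sin t ^ m)) * hc)
    (by apply Continuous.intervalIntegrable; fun_prop)
  rw [integral_sub, integral_add, integral_const_mul, integral_const_mul] at key
  · simp at key
    push_cast
    linarith
  all_goals apply Continuous.intervalIntegrable; fun_prop
end

section
/- Let f : ℝ → ℝ be a C^∞ function and let k ∈ ℕ with k ≥ 1. If ∫₀^π f(t+α)·(sin t)^k dt = 0 for every α ∈ ℝ, then ∫₀^π f(t+α)·(sin t)^{k−1}·(cos t) dt = 0 for every α ∈ ℝ. -/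
open Real intervalIntegral

/-- If all the shifted integrals `∫₀^π f(t+α)(sin t)^k dt` of a smooth function vanish,
then so do the shifted integrals `∫₀^π f(t+α)(sin t)^{k-1}(cos t) dt`. -/
theorem deriv_of_weighted_integral_vanishes
    (f : ℝ → ℝ) (hf : ContDiff ℝ (⊤ : ℕ∞) f) (k : ℕ) (hk : 1 ≤ k)
    (h : ∀ α : ℝ, ∫ t in (0:ℝ)..π, f (t + α) * Real.sin t ^ k = 0) :
    ∀ α : ℝ, ∫ t in (0:ℝ)..π, f (t + α) * Real.sin t ^ (k - 1) * Real.cos t = 0 := by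
  intro α
  have hd : Differentiable ℝ f := hf.differentiable (by simp)
  have hc : Continuous f := hd.continuous
  have hc' : Continuous (deriv f) := hf.continuous_deriv (by norm_cast)
  obtain ⟨C, hC⟩ := (isCompact_Icc (a := α - 1) (b := π + α + 1)).exists_bound_of_continuousOn
    hc'.continuousOn
  have hshift : ∀ t x : ℝ, HasDerivAt (fun x => f (t + x)) (deriv f (t + x)) x := fun t x =>
    (hd (t + x)).hasDerivAt.comp_const_add t x
  have hshift' : ∀ x t : ℝ, HasDerivAt (fun t => f (t + x)) (deriv f (t + x)) t := fun x t =>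
    (hd (t + x)).hasDerivAt.comp_add_const t x
  have key := (intervalIntegral.hasDerivAt_integral_of_dominated_loc_of_deriv_le
    (μ := MeasureTheory.volume) (a := 0) (b := π)
    (F := fun x t => f (t + x) * Real.sin t ^ k)
    (F' := fun x t => deriv f (t + x) * Real.sin t ^ k)
    (x₀ := α) (s := Metric.ball α 1) (bound := fun _ => C)
    (Metric.ball_mem_nhds α one_pos)
    (Filter.Eventually.of_forall fun x =>
      (by fun_prop : Continuous fun t => f (t + x) * Real.sin t ^ k).aestronglyMeasurable)
    ((by fun_prop : Continuous fun t => f (t + α) * Real.sin t ^ k).intervalIntegrable _ _)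
    ((by fun_prop : Continuous fun t => deriv f (t + α) * Real.sin t ^ k).aestronglyMeasurable)
    (Filter.Eventually.of_forall (by
      intro t ht x hx
      rw [Set.uIoc_of_le Real.pi_pos.le] at ht
      rw [Metric.mem_ball, Real.dist_eq, abs_lt] at hx
      have h1 := hC (t + x) ⟨by linarith [ht.1, hx.1], by linarith [ht.2, hx.2]⟩
      have h2 : ‖Real.sin t ^ k‖ ≤ 1 := by
        rw [norm_pow]
        exact pow_le_one₀ (norm_nonneg _) (Real.abs_sin_le_one t)
      rw [norm_mul]
      nlinarith [norm_nonneg (deriv f (t + x))]))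
    (by simp)
    (Filter.Eventually.of_forall fun t _ x _ => (hshift t x).mul_const _)).2
  simp only [h] at key
  have h0 : ∫ t in (0:ℝ)..π, deriv f (t + α) * Real.sin t ^ k = 0 :=
    key.unique (hasDerivAt_const α (0:ℝ))
  have parts := intervalIntegral.integral_mul_deriv_eq_deriv_mul (a := 0) (b := π)
    (u := fun t => f (t + α)) (v := fun t => Real.sin t ^ k)
    (u' := fun t => deriv f (t + α))
    (v' := fun t => (k : ℝ) * Real.sin t ^ (k - 1) * Real.cos t)
    (fun t _ => hshift' α t) (fun t _ => (Real.hasDerivAt_sin t).pow k)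
    ((by fun_prop : Continuous fun t => deriv f (t + α)).intervalIntegrable _ _)
    ((by fun_prop : Continuous fun t =>
      (k : ℝ) * Real.sin t ^ (k - 1) * Real.cos t).intervalIntegrable _ _)
  have hk0 : k ≠ 0 := by omega
  rw [h0] at parts
  simp only [Real.sin_pi, Real.sin_zero, zero_pow hk0, mul_zero, sub_zero] at parts
  have e : (fun t => f (t + α) * ((k : ℝ) * Real.sin t ^ (k - 1) * Real.cos t)) =
      fun t => (k : ℝ) * (f (t + α) * Real.sin t ^ (k - 1) * Real.cos t) := by
    funext t; ring
  rw [e, intervalIntegral.integral_const_mul] at parts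
  exact (mul_eq_zero.mp parts).resolve_left (by exact_mod_cast hk0)
end

section
/- Let f : ℝ → ℝ be a C^∞ function. If ∫₀^π f(t+α)·(sin t) dt = 0 for every α ∈ ℝ, then f(α+π) = −f(α) for every α ∈ ℝ. -/
open Real intervalIntegral

/-- If all the shifted integrals `∫₀^π f(t+α) sin t dt` of a smooth function vanish,
then `f` is odd under translation by `π`. -/
theorem antiperiodic_of_shifted_sin_integrals_vanish
    (f : ℝ → ℝ) (hf : ContDiff ℝ (⊤ : ℕ∞) f)
    (h : ∀ α : ℝ, ∫ t in (0:ℝ)..π, f (t + α) * Real.sin t = 0) :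
    ∀ α : ℝ, f (α + π) = -f α := by
  have hc : Continuous f := hf.continuous
  have key : ∀ u : ℝ → ℝ, Continuous u → ∀ x : ℝ,
      HasDerivAt (fun a : ℝ => ∫ s in a..(a + π), u s) (u (x + π) - u x) x := by
    intro u hu x
    have e : (fun a : ℝ => ∫ s in a..(a + π), u s)
        = fun a : ℝ => (∫ s in (0:ℝ)..(a + π), u s) - ∫ s in (0:ℝ)..a, u s := by
      funext a
      rw [integral_interval_sub_left (hu.intervalIntegrable _ _) (hu.intervalIntegrable _ _)]
    have d : ∀ y : ℝ, HasDerivAt (fun a : ℝ => ∫ s in (0:ℝ)..a, u s) (u y) y := fun y =>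
      hu.integral_hasStrictDerivAt 0 y |>.hasDerivAt
    rw [e]
    exact ((d (x + π)).comp_add_const x π).sub (d x)
  have dA := key (fun s => f s * Real.sin s) (by fun_prop)
  have dB := key (fun s => f s * Real.cos s) (by fun_prop)
  set A : ℝ → ℝ := fun a => ∫ s in a..(a + π), f s * Real.sin s with hA
  set B : ℝ → ℝ := fun a => ∫ s in a..(a + π), f s * Real.cos s with hB
  have h1 : ∀ a, A a * Real.cos a - B a * Real.sin a = 0 := by
    intro a
    rw [← h a]
    have e := integral_comp_add_right (a := 0) (b := π) (fun s => f s * Real.sin (s - a)) a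
    simp only [add_sub_cancel_right, zero_add] at e
    rw [e, add_comm π a, hA, hB]
    simp only
    rw [← integral_mul_const, ← integral_mul_const, ← integral_sub]
    · congr 1
      funext s
      rw [Real.sin_sub]
      ring
    · exact Continuous.intervalIntegrable (by fun_prop) _ _
    · exact Continuous.intervalIntegrable (by fun_prop) _ _
  have h2 : ∀ a, A a * Real.sin a + B a * Real.cos a = 0 := by
    intro a
    have d := ((dA a).mul (Real.hasDerivAt_cos a)).sub ((dB a).mul (Real.hasDerivAt_sin a))
    have z : HasDerivAt (A * Real.cos - B * Real.sin) 0 a := by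
      have : A * Real.cos - B * Real.sin = fun _ => (0:ℝ) := funext h1
      rw [this]
      exact hasDerivAt_const a 0
    have := d.unique z
    simp only [Real.sin_add_pi, Real.cos_add_pi] at this
    linarith
  have hA0 : A = fun _ => 0 := by
    funext a
    linear_combination Real.cos a * h1 a + Real.sin a * h2 a - A a * Real.sin_sq_add_cos_sq a
  have hB0 : B = fun _ => 0 := by
    funext a
    linear_combination Real.cos a * h2 a - Real.sin a * h1 a - B a * Real.sin_sq_add_cos_sq a
  intro a
  have eA := (dA a).unique (hA0 ▸ hasDerivAt_const a (0:ℝ))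
  have eB := (dB a).unique (hB0 ▸ hasDerivAt_const a (0:ℝ))
  simp only [Real.sin_add_pi, Real.cos_add_pi] at eA eB
  linear_combination -Real.sin a * eA - Real.cos a * eB
    - (f (a + π) + f a) * Real.sin_sq_add_cos_sq a
end

section
/- Let f : ℝ → ℝ be a C^∞ function and let k ∈ ℕ. If ∫₀^π f(t+α)·(sin t)^k dt = 0 for every α ∈ ℝ, then f(t+π) = (−1)^k·f(t) for every t ∈ ℝ. -/
open Real intervalIntegral

lemma aux_deriv_vanish (f f_a w : ℝ → ℝ) (hd : ∀ x, HasDerivAt f (f_a x) x)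
    (hf_a : Continuous f_a) (hw : Continuous w)
    (h : ∀ α : ℝ, ∫ t in (0:ℝ)..π, f (t + α) * w t = 0) (α : ℝ) :
    ∫ t in (0:ℝ)..π, f_a (t + α) * w t = 0 := by
  have hf : Continuous f := continuous_iff_continuousAt.2 fun x => (hd x).continuousAt
  obtain ⟨C, hC⟩ := (isCompact_Icc (a := α - 1) (b := α + π + 1)).exists_bound_of_continuousOn
    hf_a.continuousOn
  have key := intervalIntegral.hasDerivAt_integral_of_dominated_loc_of_deriv_le
    (μ := MeasureTheory.volume) (a := 0) (b := π) (x₀ := α) (s := Metric.ball α 1)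
    (F := fun α t => f (t + α) * w t) (F' := fun α t => f_a (t + α) * w t)
    (bound := fun t => C * ‖w t‖)
    (Metric.ball_mem_nhds α one_pos)
    (Filter.Eventually.of_forall fun x => by
      apply Continuous.aestronglyMeasurable; fun_prop)
    (by apply Continuous.intervalIntegrable; fun_prop)
    (by apply Continuous.aestronglyMeasurable; fun_prop)
    (Filter.Eventually.of_forall fun t ht x hx => by
      rw [Set.uIoc_of_le pi_pos.le] at ht
      rw [Metric.mem_ball, Real.dist_eq, abs_lt] at hx
      rw [norm_mul]
      gcongr
      apply hC
      constructor <;> linarith [ht.1, ht.2, hx.1, hx.2])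
    (by apply Continuous.intervalIntegrable; fun_prop)
    (Filter.Eventually.of_forall fun t ht x hx => by
      have h1 : HasDerivAt (fun x => f (t + x)) (f_a (t + x)) x := (hd (t + x)).comp_const_add t x
      exact h1.mul_const _)
  have h2 := key.2
  simp only [h] at h2
  exact h2.unique (hasDerivAt_const α (0:ℝ))

lemma aux_parts (f f_a f_b w w_a w_b : ℝ → ℝ) (hd : ∀ x, HasDerivAt f (f_a x) x)
    (hd_a : ∀ x, HasDerivAt f_a (f_b x) x) (hf_b : Continuous f_b)
    (hw : ∀ x, HasDerivAt w (w_a x) x)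
    (hw_a : ∀ x, HasDerivAt w_a (w_b x) x) (hw_b : Continuous w_b)
    (h : ∀ α : ℝ, ∫ t in (0:ℝ)..π, f (t + α) * w t = 0) (α : ℝ) :
    ∫ t in (0:ℝ)..π, f (t + α) * w_b t =
      (f_a α * w 0 - f α * w_a 0) - (f_a (π + α) * w π - f (π + α) * w_a π) := by
  have cf : Continuous f := continuous_iff_continuousAt.2 fun x => (hd x).continuousAt
  have cf_a : Continuous f_a := continuous_iff_continuousAt.2 fun x => (hd_a x).continuousAt
  have cw : Continuous w := continuous_iff_continuousAt.2 fun x => (hw x).continuousAt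
  have h2 := aux_deriv_vanish f_a f_b w hd_a hf_b cw (aux_deriv_vanish f f_a w hd cf_a cw h) α
  have hF : ∀ t, HasDerivAt (fun t => f_a (t + α) * w t - f (t + α) * w_a t)
      (f_b (t + α) * w t - f (t + α) * w_b t) t := by
    intro t
    have e := (((hd_a (t + α)).comp_add_const t α).mul (hw t)).sub
      (((hd (t + α)).comp_add_const t α).mul (hw_a t))
    exact e.congr_deriv (by ring)
  have h3 := intervalIntegral.integral_eq_sub_of_hasDerivAt (a := 0) (b := π)
    (fun x _ => hF x) (by apply Continuous.intervalIntegrable; fun_prop)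
  rw [intervalIntegral.integral_sub (by apply Continuous.intervalIntegrable; fun_prop)
    (by apply Continuous.intervalIntegrable; fun_prop), h2] at h3
  simp only [zero_add] at h3
  linarith

/-- Part (i) of Lemma 3.2 (one-dimensional form): a smooth function whose shifted
integrals against the weight `(sin t)^k` over `[0, π]` all vanish has the parity
of `k` under translation by `π`. -/
theorem parity_of_shifted_weighted_integrals_vanish
    (f : ℝ → ℝ) (hf : ContDiff ℝ (⊤ : ℕ∞) f) (k : ℕ)
    (h : ∀ α : ℝ, ∫ t in (0:ℝ)..π, f (t + α) * Real.sin t ^ k = 0) :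
    ∀ t : ℝ, f (t + π) = (-1 : ℝ) ^ k * f t := by
  have hs_a : ContDiff ℝ (⊤ : ℕ∞) (deriv f) := (contDiff_infty_iff_deriv.1 hf).2
  have hs_b : ContDiff ℝ (⊤ : ℕ∞) (deriv (deriv f)) := (contDiff_infty_iff_deriv.1 hs_a).2
  have hd : ∀ x, HasDerivAt f (deriv f x) x := fun x =>
    ((contDiff_infty_iff_deriv.1 hf).1 x).hasDerivAt
  have hd_a : ∀ x, HasDerivAt (deriv f) (deriv (deriv f) x) x := fun x =>
    ((contDiff_infty_iff_deriv.1 hs_a).1 x).hasDerivAt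
  have cf := hf.continuous
  induction k using Nat.twoStepInduction with
  | zero =>
    intro t
    have h1 := aux_deriv_vanish f (deriv f) (fun _ => 1) hd hs_a.continuous continuous_const
      (by simpa using h) t
    have h3 := intervalIntegral.integral_eq_sub_of_hasDerivAt (a := 0) (b := π)
      (fun x _ => (hd (x + t)).comp_add_const x t)
      (by have := hs_a.continuous; apply Continuous.intervalIntegrable; fun_prop)
    simp only [mul_one] at h1
    rw [h1] at h3
    rw [zero_add] at h3
    rw [add_comm t π]
    linarith
  | one =>
    intro t
    simp only [pow_one] at h
    have h1 := aux_parts f _ _ sin cos (fun x => - sin x) hd hd_a hs_b.continuous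
      hasDerivAt_sin hasDerivAt_cos (by fun_prop) h t
    simp only [mul_neg, intervalIntegral.integral_neg, h] at h1
    simp at h1
    rw [add_comm t π]
    linarith
  | more k ih _ =>
    have h0 : ∀ α : ℝ, ∫ t in (0:ℝ)..π, f (t + α) * Real.sin t ^ k = 0 := by
      intro α
      have h1 := aux_parts f _ _ (fun x => sin x ^ (k + 2))
        (fun x => (k + 2) * sin x ^ (k + 1) * cos x)
        (fun x => (k + 2) * (k + 1) * sin x ^ k - (k + 2) ^ 2 * sin x ^ (k + 2))
        hd hd_a hs_b.continuous
        (fun x => by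
          refine HasDerivAt.congr_deriv ((hasDerivAt_sin x).pow (k + 2)) ?_
          push_cast; rfl)
        (fun x => by
          refine HasDerivAt.congr_deriv
            ((((hasDerivAt_sin x).pow (k + 1)).const_mul ((k : ℝ) + 2)).mul
            (hasDerivAt_cos x)) ?_
          simp only [Pi.pow_apply, Nat.add_sub_cancel]
          push_cast
          have := sin_sq_add_cos_sq x
          have e : cos x * cos x = 1 - sin x ^ 2 := by linarith [sq (cos x)]
          linear_combination (((k : ℝ) + 2) * (k + 1) * sin x ^ k) * e)
        (by fun_prop) h α
      have e : ∀ t, f (t + α) * ((k + 2) * (k + 1) * sin t ^ k - (k + 2) ^ 2 * sin t ^ (k + 2))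
          = ((k : ℝ) + 2) * (k + 1) * (f (t + α) * sin t ^ k)
            - ((k : ℝ) + 2) ^ 2 * (f (t + α) * sin t ^ (k + 2)) := fun t => by ring
      simp only [e] at h1
      rw [intervalIntegral.integral_sub (by apply Continuous.intervalIntegrable; fun_prop)
        (by apply Continuous.intervalIntegrable; fun_prop),
        intervalIntegral.integral_const_mul, intervalIntegral.integral_const_mul, h α] at h1
      simp at h1
      have p : (k : ℝ) + 2 ≠ 0 := by positivity
      have q : (k : ℝ) + 1 ≠ 0 := by positivity
      tauto
    intro t
    rw [ih h0 t]
    ring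
end

section
/- Let n ∈ ℕ with n ≥ 2, let k ∈ ℕ, and let F be a smooth symmetric 2-cotensor field on ℝ^n. Suppose that for every unit-speed great circle γ on the unit sphere S^{n−1} ⊂ ℝ^n one has ∫₀^π F(γ(t))(γ'(t), γ'(t))·(sin t)^k dt = 0. Then for every unit vector w ∈ ℝ^n and every unit-speed great circle γ one has ∫₀^{2π} ⟨w, γ(t)⟩^k · F(γ(t))(γ'(t), γ'(t)) dt = 0. -/
open Real intervalIntegral
open scoped RealInnerProductSpace

/-- Step in the proof of part (ii) of Lemma 3.2: if the `(sin t)^k`-weighted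
geodesic X-ray transform of a smooth symmetric 2-cotensor field `F` vanishes, then
for every unit vector `w` the integrals of `⟨w, γ(t)⟩^k F(γ(t))(γ'(t), γ'(t))` over
full great circles vanish. -/
theorem full_circle_integrals_vanish
    (n : ℕ) (hn : 2 ≤ n) (k : ℕ)
    (F : EuclideanSpace ℝ (Fin n) →
      (EuclideanSpace ℝ (Fin n) →L[ℝ] EuclideanSpace ℝ (Fin n) →L[ℝ] ℝ))
    (hF : ContDiff ℝ (⊤ : ℕ∞) F)
    (hsymm : ∀ x V W, F x V W = F x W V)
    (h : ∀ u v : EuclideanSpace ℝ (Fin n), ‖u‖ = 1 → ‖v‖ = 1 → ⟪u, v⟫ = 0 →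
      ∫ t in (0:ℝ)..π,
        F (Real.cos t • u + Real.sin t • v)
          (-Real.sin t • u + Real.cos t • v) (-Real.sin t • u + Real.cos t • v)
          * Real.sin t ^ k = 0) :
    ∀ w : EuclideanSpace ℝ (Fin n), ‖w‖ = 1 →
      ∀ u v : EuclideanSpace ℝ (Fin n), ‖u‖ = 1 → ‖v‖ = 1 → ⟪u, v⟫ = 0 →
        ∫ t in (0:ℝ)..(2 * π),
          ⟪w, Real.cos t • u + Real.sin t • v⟫ ^ k *
            F (Real.cos t • u + Real.sin t • v)
              (-Real.sin t • u + Real.cos t • v) (-Real.sin t • u + Real.cos t • v)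
          = 0 := by
  intro w _ u v hu hv huv
  have hFc : Continuous F := hF.continuous
  obtain ⟨R, s, ha, hb⟩ : ∃ R s : ℝ, ⟪w, u⟫ = -(R * Real.sin s) ∧ ⟪w, v⟫ = R * Real.cos s := by
    refine ⟨‖(⟨⟪w, v⟫, -⟪w, u⟫⟩ : ℂ)‖, Complex.arg ⟨⟪w, v⟫, -⟪w, u⟫⟩, ?_, ?_⟩
    · rw [Complex.norm_mul_sin_arg]; simp
    · rw [Complex.norm_mul_cos_arg]
  have huu : ⟪u, u⟫ = 1 := by rw [real_inner_self_eq_norm_sq, hu]; norm_num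
  have hvv : ⟪v, v⟫ = 1 := by rw [real_inner_self_eq_norm_sq, hv]; norm_num
  have hvu : ⟪v, u⟫ = 0 := by rw [real_inner_comm]; exact huv
  set H : ℝ → ℝ := fun t => F (Real.cos t • u + Real.sin t • v)
    (-Real.sin t • u + Real.cos t • v) (-Real.sin t • u + Real.cos t • v) with hH
  have key : ∀ r : ℝ, ∫ t in (0:ℝ)..π, H (t + r) * Real.sin t ^ k = 0 := by
    intro r
    have h1 := h (Real.cos r • u + Real.sin r • v) (-Real.sin r • u + Real.cos r • v)
      (by
        have : ‖Real.cos r • u + Real.sin r • v‖ ^ 2 = 1 := by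
          rw [← real_inner_self_eq_norm_sq]
          simp only [inner_add_left, inner_add_right, real_inner_smul_left, real_inner_smul_right,
            huu, hvv, huv, hvu]
          linear_combination Real.sin_sq_add_cos_sq r
        exact (pow_eq_one_iff_of_nonneg (norm_nonneg _) two_ne_zero).1 this)
      (by
        have : ‖-Real.sin r • u + Real.cos r • v‖ ^ 2 = 1 := by
          rw [← real_inner_self_eq_norm_sq]
          simp only [inner_add_left, inner_add_right, real_inner_smul_left, real_inner_smul_right,
            huu, hvv, huv, hvu]
          linear_combination Real.sin_sq_add_cos_sq r
        exact (pow_eq_one_iff_of_nonneg (norm_nonneg _) two_ne_zero).1 this)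
      (by
        simp only [inner_add_left, inner_add_right, real_inner_smul_left, real_inner_smul_right,
            huu, hvv, huv, hvu]
        ring)
    rw [← h1]
    congr 1
    funext t
    have e1 : Real.cos (t + r) • u + Real.sin (t + r) • v
        = Real.cos t • (Real.cos r • u + Real.sin r • v)
          + Real.sin t • (-Real.sin r • u + Real.cos r • v) := by
      rw [Real.cos_add, Real.sin_add]; module
    have e2 : -Real.sin (t + r) • u + Real.cos (t + r) • v
        = -Real.sin t • (Real.cos r • u + Real.sin r • v)
          + Real.cos t • (-Real.sin r • u + Real.cos r • v) := by
      rw [Real.cos_add, Real.sin_add]; module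
    simp only [hH, e1, e2]
  have hHc : Continuous H := by
    have c1 : Continuous fun t : ℝ => Real.cos t • u + Real.sin t • v := by fun_prop
    have c2 : Continuous fun t : ℝ => -Real.sin t • u + Real.cos t • v := by fun_prop
    exact ((hFc.comp c1).clm_apply c2).clm_apply c2
  have hG : ∀ t : ℝ, ⟪w, Real.cos t • u + Real.sin t • v⟫ = R * Real.sin (t - s) := by
    intro t
    rw [inner_add_right, real_inner_smul_right, real_inner_smul_right, ha, hb, Real.sin_sub]
    ring
  set G : ℝ → ℝ := fun t => (R * Real.sin (t - s)) ^ k * H t with hGdef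
  have hGc : Continuous G := by fun_prop
  have hper : Function.Periodic G (2 * π) := by
    intro t
    have : t + 2 * π - s = t - s + 2 * π := by ring
    simp only [hGdef, hH, this, Real.sin_add_two_pi, Real.cos_add_two_pi]
  have half : ∀ r c : ℝ, (∀ t, Real.sin (t + r - s) = c * Real.sin t) →
      ∫ t in r..(r + π), G t = 0 := by
    intro r c hc
    have e := intervalIntegral.integral_comp_add_right (a := 0) (b := π) G r
    rw [zero_add, add_comm π r] at e
    rw [← e]
    have : ∀ t, G (t + r) = (R * c) ^ k * (H (t + r) * Real.sin t ^ k) := by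
      intro t
      simp only [hGdef, hc]
      ring
    simp only [this]
    rw [intervalIntegral.integral_const_mul, key r, mul_zero]
  have i1 := half s 1 (fun t => by rw [add_sub_cancel_right, one_mul])
  have i2 := half (s + π) (-1) (fun t => by
    rw [show t + (s + π) - s = t + π by ring, Real.sin_add_pi]; ring)
  have tot : ∫ t in (0:ℝ)..(2 * π), G t = 0 := by
    have e := hper.intervalIntegral_add_eq 0 s
    rw [zero_add] at e
    rw [e, ← intervalIntegral.integral_add_adjacent_intervals
      (hGc.intervalIntegrable s (s + π)) (hGc.intervalIntegrable (s + π) (s + 2 * π)), i1,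
      show s + 2 * π = s + π + π by ring, i2, add_zero]
  simp only [hG]
  exact tot
end

section
/- Let n ∈ ℕ with n ≥ 2, let k ∈ ℕ, and let F be a smooth symmetric 2-cotensor field on ℝ^n. Suppose that for every unit-speed great circle γ on the unit sphere S^{n−1} ⊂ ℝ^n one has ∫₀^π F(γ(t))(γ'(t), γ'(t))·(sin t)^k dt = 0. Then for every polynomial p in n real variables of total degree at most k, and for every unit-speed great circle γ, one has ∫₀^{2π} p(γ(t)) · F(γ(t))(γ'(t), γ'(t)) dt = 0. -/
open Real intervalIntegral
open scoped RealInnerProductSpace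

/-- Differentiating `∫ g (t + s) q t` in `s`, then integrating by parts. -/
lemma half_deriv (g : ℝ → ℝ) (hg : ContDiff ℝ 1 g) (q q' : ℝ → ℝ)
    (hq : ∀ t, HasDerivAt q (q' t) t) (hq' : Continuous q')
    (h : ∀ s, ∫ t in (0:ℝ)..π, g (t + s) * q t = 0) (s : ℝ) :
    ∫ t in (0:ℝ)..π, g (t + s) * q' t = g (π + s) * q π - g (0 + s) * q 0 := by
  have hgc : Continuous g := hg.continuous
  have hg' : Continuous (deriv g) := hg.continuous_deriv le_rfl
  have hgd : ∀ x, HasDerivAt g (deriv g x) x := fun x =>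
    (hg.differentiable one_ne_zero x).hasDerivAt
  have hqc : Continuous q := continuous_iff_continuousAt.2 fun t => (hq t).continuousAt
  have hgs : ∀ t s, HasDerivAt (fun x => g (t + x)) (deriv g (t + s)) s := fun t s => by
    simpa using (hgd (t + s)).comp_const_add t s
  have hgt : ∀ t, HasDerivAt (fun x => g (x + s)) (deriv g (t + s)) t := fun t => by
    simpa using (hgd (t + s)).comp_add_const t s
  obtain ⟨C, hC⟩ := ((isCompact_Icc (a := s - 1) (b := s + 1)).prod
      (isCompact_uIcc (a := (0:ℝ)) (b := π))).exists_bound_of_continuousOn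
      (f := fun z : ℝ × ℝ => deriv g (z.2 + z.1) * q z.2) (by fun_prop)
  have key := (intervalIntegral.hasDerivAt_integral_of_dominated_loc_of_deriv_le
    (μ := MeasureTheory.volume) (a := 0) (b := π) (x₀ := s) (s := Set.Icc (s - 1) (s + 1))
    (F := fun x t => g (t + x) * q t) (F' := fun x t => deriv g (t + x) * q t)
    (bound := fun _ => C)
    (Icc_mem_nhds (by linarith) (by linarith))
    (Filter.Eventually.of_forall fun x => by
      exact Continuous.aestronglyMeasurable (by fun_prop))
    (Continuous.intervalIntegrable (by fun_prop) _ _)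
    (Continuous.aestronglyMeasurable (by fun_prop))
    (Filter.Eventually.of_forall fun t ht x hx => hC (x, t) ⟨hx, Set.uIoc_subset_uIcc ht⟩)
    (by simp)
    (Filter.Eventually.of_forall fun t ht x hx => (hgs t x).mul_const (q t))).2
  have h0 : ∫ t in (0:ℝ)..π, deriv g (t + s) * q t = 0 := by
    have : (fun x => ∫ t in (0:ℝ)..π, g (t + x) * q t) = fun _ => 0 := funext h
    rw [this] at key
    exact key.unique (hasDerivAt_const s 0)
  rw [intervalIntegral.integral_mul_deriv_eq_deriv_mul (u := fun x => g (x + s)) (v := q)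
    (u' := fun t => deriv g (t + s)) (v' := q') (fun t _ => hgt t) (fun t _ => hq t)
    (Continuous.intervalIntegrable (by fun_prop) _ _)
    (Continuous.intervalIntegrable (by fun_prop) _ _), h0, sub_zero]

lemma hasDerivAt_sincos (a b : ℕ) (t : ℝ) :
    HasDerivAt (fun t => sin t ^ a * cos t ^ b)
      ((a * sin t ^ (a - 1) * cos t) * cos t ^ b
        + sin t ^ a * (b * cos t ^ (b - 1) * (- sin t))) t :=
  ((hasDerivAt_sin t).pow a).mul ((hasDerivAt_cos t).pow b)

lemma half_all (g : ℝ → ℝ) (hg : ContDiff ℝ 1 g) (k : ℕ)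
    (h : ∀ s, ∫ t in (0:ℝ)..π, g (t + s) * sin t ^ k = 0) :
    ∀ b a : ℕ, a + b = k → ∀ s, ∫ t in (0:ℝ)..π, g (t + s) * (sin t ^ a * cos t ^ b) = 0 := by
  have hgc : Continuous g := hg.continuous
  intro b
  induction b using Nat.strong_induction_on with
  | _ b ih =>
  intro a hab s
  rcases b with _ | b
  · obtain rfl : a = k := by omega
    simpa using h s
  · have h1 := half_deriv g hg _ _ (hasDerivAt_sincos (a + 1) b) (by fun_prop)
      (ih b (by omega) (a + 1) (by omega)) s
    have h2 : ∫ t in (0:ℝ)..π, g (t + s) * (sin t ^ (a + 1) * (b * cos t ^ (b - 1) * (- sin t)))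
        = 0 := by
      rcases b with _ | b
      · simp
      · have h3 := ih b (by omega) (a + 2) (by omega) s
        have : ∀ t, g (t + s) * (sin t ^ (a + 1) * (((b + 1 : ℕ) : ℝ) *
            cos t ^ (b + 1 - 1) * (- sin t)))
            = (-((b + 1 : ℕ) : ℝ)) * (g (t + s) * (sin t ^ (a + 2) * cos t ^ b)) := by
          intro t
          simp only [Nat.add_sub_cancel]
          ring
        simp_rw [this]
        rw [intervalIntegral.integral_const_mul, h3, mul_zero]
    simp only [mul_add (g _)] at h1
    rw [intervalIntegral.integral_add (Continuous.intervalIntegrable (by fun_prop) _ _)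
      (Continuous.intervalIntegrable (by fun_prop) _ _), h2] at h1
    have : ∀ t, g (t + s) * (((a + 1 : ℕ) : ℝ) * sin t ^ (a + 1 - 1) * cos t * cos t ^ b)
        = (((a + 1 : ℕ) : ℝ)) * (g (t + s) * (sin t ^ a * cos t ^ (b + 1))) := by
      intro t
      simp only [Nat.add_sub_cancel]
      ring
    simp_rw [this] at h1
    rw [intervalIntegral.integral_const_mul] at h1
    have hne : ((a + 1 : ℕ) : ℝ) ≠ 0 := by positivity
    simpa [hne, -Nat.cast_add] using h1

lemma g_parity (g : ℝ → ℝ) (hg : ContDiff ℝ 1 g) (k : ℕ)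
    (h : ∀ s, ∫ t in (0:ℝ)..π, g (t + s) * sin t ^ k = 0) (s : ℝ) :
    g (s + π) = (-1) ^ k * g s := by
  have hA := half_all g hg k h
  have h1 := half_deriv g hg _ _ (hasDerivAt_sincos 0 k) (by fun_prop) (hA k 0 (by omega)) s
  have h2 : ∫ t in (0:ℝ)..π, g (t + s) * ((((0 : ℕ) : ℝ) * sin t ^ (0 - 1) * cos t) * cos t ^ k
        + sin t ^ 0 * (k * cos t ^ (k - 1) * (- sin t))) = 0 := by
    rcases k with _ | k
    · simp
    · have h3 := hA k 1 (by omega) s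
      have : ∀ t, g (t + s) * ((((0 : ℕ) : ℝ) * sin t ^ (0 - 1) * cos t) * cos t ^ (k + 1)
          + sin t ^ 0 * (((k + 1 : ℕ) : ℝ) * cos t ^ (k + 1 - 1) * (- sin t)))
          = (-((k + 1 : ℕ) : ℝ)) * (g (t + s) * (sin t ^ 1 * cos t ^ k)) := by
        intro t
        simp only [Nat.add_sub_cancel]
        push_cast
        ring
      simp_rw [this]
      rw [intervalIntegral.integral_const_mul, h3, mul_zero]
  rw [h2] at h1
  simp only [pow_zero, one_mul, cos_pi, cos_zero, one_pow, mul_one, zero_add] at h1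
  have h4 : ((-1 : ℝ) ^ k) * (-1) ^ k = 1 := by rw [← mul_pow]; simp
  rw [add_comm s π]
  linear_combination (-(-1 : ℝ) ^ k) * h1 - g (π + s) * h4

lemma split_two_pi (f : ℝ → ℝ) (hf : Continuous f) :
    ∫ t in (0:ℝ)..(2 * π), f t = (∫ t in (0:ℝ)..π, f t) + ∫ t in (0:ℝ)..π, f (t + π) := by
  rw [intervalIntegral.integral_comp_add_right, zero_add, ← two_mul,
    intervalIntegral.integral_add_adjacent_intervals] <;>
  exact hf.intervalIntegrable _ _

/-- `f` is annihilated after multiplication by any `sin ^ a cos ^ b` completing degree `k`. -/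
def PP (g : ℝ → ℝ) (k j : ℕ) (f : ℝ → ℝ) : Prop :=
  Continuous f ∧ (∀ t, f (t + π) = (-1) ^ j * f t) ∧ ∀ a b : ℕ, a + b + j = k →
    ∫ t in (0:ℝ)..(2 * π), f t * (sin t ^ a * cos t ^ b) * g t = 0

lemma PP_one (g : ℝ → ℝ) (hg : ContDiff ℝ 1 g) (k : ℕ)
    (h : ∀ s, ∫ t in (0:ℝ)..π, g (t + s) * sin t ^ k = 0) : PP g k 0 (fun _ => 1) := by
  have hgc : Continuous g := hg.continuous
  refine ⟨continuous_const, by simp, fun a b hab => ?_⟩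
  have hA := half_all g hg k h b a (by omega)
  rw [split_two_pi _ (by fun_prop)]
  have e1 : ∀ t, 1 * (sin t ^ a * cos t ^ b) * g t = g (t + 0) * (sin t ^ a * cos t ^ b) := by
    intro t; rw [add_zero]; ring
  have e2 : ∀ t, 1 * (sin (t + π) ^ a * cos (t + π) ^ b) * g (t + π)
      = ((-1) ^ a * (-1) ^ b) * (g (t + π) * (sin t ^ a * cos t ^ b)) := by
    intro t
    rw [sin_add_pi, cos_add_pi, neg_pow (sin t), neg_pow (cos t)]; ring
  simp_rw [e2, e1]
  rw [intervalIntegral.integral_const_mul, hA, hA]; simp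

lemma PP_lin (g : ℝ → ℝ) (hgc : Continuous g) (k j : ℕ) (f : ℝ → ℝ) (h : PP g k j f) (x y : ℝ) :
    PP g k (j + 1) (fun t => f t * (cos t * x + sin t * y)) := by
  obtain ⟨hc, hp, hi⟩ := h
  refine ⟨by fun_prop, fun t => ?_, fun a b hab => ?_⟩
  · simp only [hp, sin_add_pi, cos_add_pi]; ring
  · have h1 := hi a (b + 1) (by omega)
    have h2 := hi (a + 1) b (by omega)
    have e : ∀ t, f t * (cos t * x + sin t * y) * (sin t ^ a * cos t ^ b) * g t
        = x * (f t * (sin t ^ a * cos t ^ (b + 1)) * g t)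
          + y * (f t * (sin t ^ (a + 1) * cos t ^ b) * g t) := by intro t; ring
    simp_rw [e]
    rw [intervalIntegral.integral_add (Continuous.intervalIntegrable (by fun_prop) _ _)
      (Continuous.intervalIntegrable (by fun_prop) _ _),
      intervalIntegral.integral_const_mul, intervalIntegral.integral_const_mul, h1, h2]
    simp

lemma PP_lin_pow (g : ℝ → ℝ) (hgc : Continuous g) (k j : ℕ) (f : ℝ → ℝ) (h : PP g k j f)
    (x y : ℝ) (m : ℕ) :
    PP g k (j + m) (fun t => f t * (cos t * x + sin t * y) ^ m) := by
  induction m with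
  | zero => simpa using h
  | succ m ih =>
    have := PP_lin g hgc k _ _ ih x y
    simpa only [pow_succ, mul_assoc, add_assoc] using this

lemma PP_add_two (g : ℝ → ℝ) (hgc : Continuous g) (k j : ℕ) (f : ℝ → ℝ) (h : PP g k j f) :
    PP g k (j + 2) f := by
  obtain ⟨hc, hp, hi⟩ := h
  refine ⟨hc, fun t => ?_, fun a b hab => ?_⟩
  · rw [hp]; ring
  · have h1 := hi a (b + 2) (by omega)
    have h2 := hi (a + 2) b (by omega)
    have e : ∀ t, f t * (sin t ^ a * cos t ^ b) * g t
        = (f t * (sin t ^ a * cos t ^ (b + 2)) * g t)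
          + (f t * (sin t ^ (a + 2) * cos t ^ b) * g t) := by
      intro t
      linear_combination (-(f t * (sin t ^ a * cos t ^ b) * g t)) * sin_sq_add_cos_sq t
    simp_rw [e]
    rw [intervalIntegral.integral_add (Continuous.intervalIntegrable (by fun_prop) _ _)
      (Continuous.intervalIntegrable (by fun_prop) _ _), h1, h2]
    simp

lemma PP_final (g : ℝ → ℝ) (hgc : Continuous g) (k j : ℕ) (hj : j ≤ k) (f : ℝ → ℝ)
    (hgp : ∀ s, g (s + π) = (-1) ^ k * g s) (h : PP g k j f) :
    ∫ t in (0:ℝ)..(2 * π), f t * g t = 0 := by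
  obtain ⟨d, rfl⟩ := Nat.exists_eq_add_of_le hj
  rcases Nat.even_or_odd' d with ⟨m, rfl | rfl⟩
  · have : ∀ m' : ℕ, PP g (j + 2 * m) (j + 2 * m') f := by
      intro m'
      induction m' with
      | zero => simpa using h
      | succ m' ih => exact PP_add_two g hgc _ _ f ih
    simpa using (this m).2.2 0 0 (by omega)
  · have hc := h.1
    rw [split_two_pi _ (by fun_prop)]
    have e : ∀ t, f (t + π) * g (t + π) = -(f t * g t) := by
      intro t
      have h4 : ((-1 : ℝ) ^ j) * (-1) ^ j = 1 := by rw [← mul_pow]; simp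
      rw [h.2.1, hgp, pow_add, pow_succ, pow_mul]
      simp only [even_two, Even.neg_pow, one_pow]
      linear_combination (-(f t * g t)) * h4
    simp_rw [e]
    rw [intervalIntegral.integral_neg]; simp

lemma PP_prod (g : ℝ → ℝ) (hgc : Continuous g) (k : ℕ) (h1 : PP g k 0 (fun _ => 1)) {ι : Type*}
    (x y : ι → ℝ) (e : ι → ℕ) (S : Finset ι) :
    PP g k (∑ i ∈ S, e i) (fun t => ∏ i ∈ S, (cos t * x i + sin t * y i) ^ e i) := by
  classical
  induction S using Finset.induction_on with
  | empty => simpa using h1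
  | insert i S hi ih =>
    have := PP_lin_pow g hgc k _ _ ih (x i) (y i) (e i)
    simp only [Finset.sum_insert hi, Finset.prod_insert hi]
    rw [add_comm]
    convert this using 2
    ring

/-- Part (ii) of Lemma 3.2: if the `(sin t)^k`-weighted geodesic X-ray transform of
a smooth symmetric 2-cotensor field `F` vanishes, then for every polynomial `p` of
total degree at most `k` the integrals of `p(γ(t)) F(γ(t))(γ'(t), γ'(t))` over full
great circles vanish. -/
theorem polynomial_weighted_circle_integrals_vanish
    (n : ℕ) (hn : 2 ≤ n) (k : ℕ)
    (F : EuclideanSpace ℝ (Fin n) →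
      (EuclideanSpace ℝ (Fin n) →L[ℝ] EuclideanSpace ℝ (Fin n) →L[ℝ] ℝ))
    (hF : ContDiff ℝ (⊤ : ℕ∞) F)
    (hsymm : ∀ x V W, F x V W = F x W V)
    (h : ∀ u v : EuclideanSpace ℝ (Fin n), ‖u‖ = 1 → ‖v‖ = 1 → ⟪u, v⟫ = 0 →
      ∫ t in (0:ℝ)..π,
        F (Real.cos t • u + Real.sin t • v)
          (-Real.sin t • u + Real.cos t • v) (-Real.sin t • u + Real.cos t • v)
          * Real.sin t ^ k = 0) :
    ∀ p : MvPolynomial (Fin n) ℝ, p.totalDegree ≤ k →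
      ∀ u v : EuclideanSpace ℝ (Fin n), ‖u‖ = 1 → ‖v‖ = 1 → ⟪u, v⟫ = 0 →
        ∫ t in (0:ℝ)..(2 * π),
          (MvPolynomial.eval
              (fun i => (Real.cos t • u + Real.sin t • v : EuclideanSpace ℝ (Fin n)) i) p) *
            F (Real.cos t • u + Real.sin t • v)
              (-Real.sin t • u + Real.cos t • v) (-Real.sin t • u + Real.cos t • v)
          = 0 := by
  intro p hp u v hu hv huv
  set g : ℝ → ℝ := fun t => F (Real.cos t • u + Real.sin t • v)
          (-Real.sin t • u + Real.cos t • v) (-Real.sin t • u + Real.cos t • v) with hgdef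
  have hF1 : ContDiff ℝ 1 F := hF.of_le (by exact_mod_cast le_top)
  have hcs : ContDiff ℝ 1 (fun t : ℝ => Real.cos t • u + Real.sin t • v) :=
    (contDiff_cos.smul contDiff_const).add (contDiff_sin.smul contDiff_const)
  have hcs' : ContDiff ℝ 1 (fun t : ℝ => -Real.sin t • u + Real.cos t • v) :=
    (contDiff_sin.neg.smul contDiff_const).add (contDiff_cos.smul contDiff_const)
  have hg : ContDiff ℝ 1 g := ((hF1.comp hcs).clm_apply hcs').clm_apply hcs'
  have hgc : Continuous g := hg.continuous
  have uu : ⟪u, u⟫ = 1 := by rw [real_inner_self_eq_norm_sq, hu]; norm_num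
  have vv : ⟪v, v⟫ = 1 := by rw [real_inner_self_eq_norm_sq, hv]; norm_num
  have vu : ⟪v, u⟫ = 0 := by rw [real_inner_comm]; exact huv
  have hk : ∀ s, ∫ t in (0:ℝ)..π, g (t + s) * Real.sin t ^ k = 0 := by
    intro s
    have h1 : ‖Real.cos s • u + Real.sin s • v‖ = 1 := by
      have : ‖Real.cos s • u + Real.sin s • v‖ ^ 2 = 1 := by
        rw [← real_inner_self_eq_norm_sq]
        simp only [inner_add_left, inner_add_right, real_inner_smul_left, real_inner_smul_right,
          uu, vv, vu, huv]
        linear_combination Real.sin_sq_add_cos_sq s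
      exact (sq_eq_sq₀ (norm_nonneg _) zero_le_one).1 (by rw [this, one_pow])
    have h2 : ‖-Real.sin s • u + Real.cos s • v‖ = 1 := by
      have : ‖-Real.sin s • u + Real.cos s • v‖ ^ 2 = 1 := by
        rw [← real_inner_self_eq_norm_sq]
        simp only [inner_add_left, inner_add_right, real_inner_smul_left, real_inner_smul_right,
          uu, vv, vu, huv]
        linear_combination Real.sin_sq_add_cos_sq s
      exact (sq_eq_sq₀ (norm_nonneg _) zero_le_one).1 (by rw [this, one_pow])
    have h3 : ⟪Real.cos s • u + Real.sin s • v, -Real.sin s • u + Real.cos s • v⟫ = 0 := by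
      simp only [inner_add_left, inner_add_right, real_inner_smul_left, real_inner_smul_right,
          uu, vv, vu, huv]
      ring
    have := h _ _ h1 h2 h3
    rw [← this]
    congr 1
    funext t
    have e1 : Real.cos (t + s) • u + Real.sin (t + s) • v
        = Real.cos t • (Real.cos s • u + Real.sin s • v)
          + Real.sin t • (-Real.sin s • u + Real.cos s • v) := by
      rw [Real.cos_add, Real.sin_add]; module
    have e2 : -Real.sin (t + s) • u + Real.cos (t + s) • v
        = -Real.sin t • (Real.cos s • u + Real.sin s • v)
          + Real.cos t • (-Real.sin s • u + Real.cos s • v) := by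
      rw [Real.cos_add, Real.sin_add]; module
    simp only [hgdef]
    rw [e1, e2]
  have h1 := PP_one g hg k hk
  have hgp := g_parity g hg k hk
  have hcalc : ∀ t : ℝ, (MvPolynomial.eval
      (fun i => (Real.cos t • u + Real.sin t • v : EuclideanSpace ℝ (Fin n)) i) p) * g t
      = ∑ d ∈ p.support, p.coeff d *
        ((∏ i, (Real.cos t * u i + Real.sin t * v i) ^ d i) * g t) := by
    intro t
    rw [MvPolynomial.eval_eq', Finset.sum_mul]
    refine Finset.sum_congr rfl fun d _ => ?_
    simp [mul_assoc]
  change ∫ t in (0:ℝ)..(2 * π), (MvPolynomial.eval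
      (fun i => (Real.cos t • u + Real.sin t • v : EuclideanSpace ℝ (Fin n)) i) p) * g t = 0
  simp_rw [hcalc]
  rw [intervalIntegral.integral_finsetSum
    (fun d _ => Continuous.intervalIntegrable (by fun_prop) _ _)]
  refine Finset.sum_eq_zero fun d hd => ?_
  rw [intervalIntegral.integral_const_mul]
  have hdeg : ∑ i, d i ≤ k := by
    have := (MvPolynomial.le_totalDegree hd).trans hp
    rwa [Finsupp.sum_fintype _ _ (fun _ => rfl)] at this
  rw [PP_final g hgc k _ hdeg _ hgp (PP_prod g hgc k h1 (fun i => u i) (fun i => v i) d Finset.univ),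
    mul_zero]
end

section
/- Let n ∈ ℕ with n ≥ 3 and let F be a smooth symmetric 2-cotensor field on ℝ^n which is even, i.e. F(−x)(V, W) = F(x)(V, W) for all x, V, W ∈ ℝ^n. Suppose that for every unit-speed great circle γ on the unit sphere S^{n−1} ⊂ ℝ^n and for all coordinate indices 1 ≤ i, j ≤ n one has ∫₀^{2π} γ_i(t)·γ_j(t)·F(γ(t))(γ'(t), γ'(t)) dt = 0, where γ_i(t) denotes the i-th coordinate of γ(t). Then F(x)(V, V) = 0 for every x ∈ ℝ^n with ‖x‖ = 1 and every V ∈ ℝ^n with ⟨x, V⟩ = 0. -/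
open Real intervalIntegral
open scoped RealInnerProductSpace

namespace EvenTensor
open MeasureTheory Matrix

abbrev G3 : Type := Matrix.orthogonalGroup (Fin 3) ℝ

instance instCompactG3 : CompactSpace G3 := by
  have hc : IsClosed (Matrix.orthogonalGroup (Fin 3) ℝ : Set (Matrix (Fin 3) (Fin 3) ℝ)) := by
    have : (Matrix.orthogonalGroup (Fin 3) ℝ : Set (Matrix (Fin 3) (Fin 3) ℝ))
        = {A | A * Aᵀ = 1} := by
      ext A
      exact Matrix.mem_orthogonalGroup_iff _ _
    rw [this]
    exact isClosed_eq (by fun_prop) continuous_const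
  have hK : IsCompact (Set.univ.pi fun _ : Fin 3 => Set.univ.pi fun _ : Fin 3 => Set.Icc (-1:ℝ) 1) :=
    isCompact_univ_pi fun _ => isCompact_univ_pi fun _ => isCompact_Icc
  refine isCompact_iff_compactSpace.mp (hK.of_isClosed_subset hc ?_)
  intro A hA i _ j _
  have := entry_norm_bound_of_unitary (𝕜 := ℝ) hA i j
  exact abs_le.mp this

noncomputable instance instMeasG3 : MeasurableSpace G3 := borel G3
instance instBorelG3 : BorelSpace G3 := ⟨rfl⟩

instance instSecondG3 : SecondCountableTopology G3 := by
  have : SecondCountableTopology (Matrix (Fin 3) (Fin 3) ℝ) :=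
    inferInstanceAs (SecondCountableTopology (Fin 3 → Fin 3 → ℝ))
  exact TopologicalSpace.Subtype.secondCountableTopology _

noncomputable def mu : Measure G3 := Measure.haar

instance : mu.IsHaarMeasure := by unfold mu; infer_instance
instance : IsFiniteMeasure mu := by infer_instance

lemma intg {f : G3 → ℝ} (hf : Continuous f) : Integrable f mu :=
  hf.integrable_of_hasCompactSupport (HasCompactSupport.of_compactSpace f)

/-- row -/
def rw3 (g : G3) (i : Fin 3) : Fin 3 → ℝ := (g : Matrix (Fin 3) (Fin 3) ℝ) i

@[fun_prop] lemma rw3_cont (i : Fin 3) : Continuous (fun g : G3 => rw3 g i) := by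
  unfold rw3
  have : Continuous (fun g : G3 => (g : Matrix (Fin 3) (Fin 3) ℝ)) := continuous_subtype_val
  exact (continuous_apply i).comp this

lemma rw3_orth (g : G3) (i j : Fin 3) : rw3 g i ⬝ᵥ rw3 g j = if i = j then 1 else 0 := by
  have := (Matrix.mem_orthogonalGroup_iff _ _).mp g.2
  have h2 := congrFun (congrFun this i) j
  rw [Matrix.one_apply] at h2
  rw [← h2]
  rfl

/-- Parseval -/
lemma rw3_pars (g : G3) (a b : Fin 3 → ℝ) :
    (rw3 g 0 ⬝ᵥ a) * (rw3 g 0 ⬝ᵥ b) + (rw3 g 1 ⬝ᵥ a) * (rw3 g 1 ⬝ᵥ b)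
      + (rw3 g 2 ⬝ᵥ a) * (rw3 g 2 ⬝ᵥ b) = a ⬝ᵥ b := by
  have h := (Matrix.mem_orthogonalGroup_iff' _ _).mp g.2
  have h1 : ((g : Matrix (Fin 3) (Fin 3) ℝ) *ᵥ a) ⬝ᵥ ((g : Matrix (Fin 3) (Fin 3) ℝ) *ᵥ b)
      = a ⬝ᵥ b := by
    rw [Matrix.dotProduct_mulVec, ← Matrix.mulVec_transpose, Matrix.mulVec_mulVec]
    have : (g : Matrix (Fin 3) (Fin 3) ℝ)ᵀ * (g : Matrix (Fin 3) (Fin 3) ℝ) = 1 := h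
    rw [this, Matrix.one_mulVec]
  rw [← h1]
  simp [dotProduct, Fin.sum_univ_three, Matrix.mulVec, rw3]

noncomputable def rotM01 (t : ℝ) : Matrix (Fin 3) (Fin 3) ℝ :=
  !![cos t, sin t, 0; -sin t, cos t, 0; 0, 0, 1]
noncomputable def rotM12 (t : ℝ) : Matrix (Fin 3) (Fin 3) ℝ :=
  !![1, 0, 0; 0, cos t, sin t; 0, -sin t, cos t]

noncomputable def rot01 (t : ℝ) : G3 := ⟨rotM01 t, by
  rw [Matrix.mem_orthogonalGroup_iff]
  have := sin_sq_add_cos_sq t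
  ext i j
  fin_cases i <;> fin_cases j <;>
    simp [rotM01, Matrix.mul_apply, Fin.sum_univ_three] <;> linarith⟩
noncomputable def rot12 (t : ℝ) : G3 := ⟨rotM12 t, by
  rw [Matrix.mem_orthogonalGroup_iff]
  have := sin_sq_add_cos_sq t
  ext i j
  fin_cases i <;> fin_cases j <;>
    simp [rotM12, Matrix.mul_apply, Fin.sum_univ_three] <;> linarith⟩

lemma rot01_cont : Continuous rot01 := by
  refine Continuous.subtype_mk ?_ _
  refine continuous_matrix fun i j => ?_
  fin_cases i <;> fin_cases j <;> simp [rotM01] <;> fun_prop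
lemma rot12_cont : Continuous rot12 := by
  refine Continuous.subtype_mk ?_ _
  refine continuous_matrix fun i j => ?_
  fin_cases i <;> fin_cases j <;> simp [rotM12] <;> fun_prop

lemma rot01_0 (t : ℝ) (g : G3) : rw3 (rot01 t * g) 0 = cos t • rw3 g 0 + sin t • rw3 g 1 := by
  ext j; simp [rw3, rot01, rotM01, Matrix.mul_apply, Fin.sum_univ_three]
lemma rot01_1 (t : ℝ) (g : G3) : rw3 (rot01 t * g) 1 = (-sin t) • rw3 g 0 + cos t • rw3 g 1 := by
  ext j; simp [rw3, rot01, rotM01, Matrix.mul_apply, Fin.sum_univ_three]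
lemma rot01_2 (t : ℝ) (g : G3) : rw3 (rot01 t * g) 2 = rw3 g 2 := by
  ext j; simp [rw3, rot01, rotM01, Matrix.mul_apply, Fin.sum_univ_three]
lemma rot12_0 (t : ℝ) (g : G3) : rw3 (rot12 t * g) 0 = rw3 g 0 := by
  ext j; simp [rw3, rot12, rotM12, Matrix.mul_apply, Fin.sum_univ_three]
lemma rot12_1 (t : ℝ) (g : G3) : rw3 (rot12 t * g) 1 = cos t • rw3 g 1 + sin t • rw3 g 2 := by
  ext j; simp [rw3, rot12, rotM12, Matrix.mul_apply, Fin.sum_univ_three]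
lemma rot12_2 (t : ℝ) (g : G3) : rw3 (rot12 t * g) 2 = (-sin t) • rw3 g 1 + cos t • rw3 g 2 := by
  ext j; simp [rw3, rot12, rotM12, Matrix.mul_apply, Fin.sum_univ_three]

lemma avg (R : ℝ → G3) (hR : Continuous R) (f : G3 → ℝ) (hf : Continuous f) :
    (2 * π) * ∫ g, f g ∂mu = ∫ g, (∫ t in (0:ℝ)..(2*π), f (R t * g)) ∂mu := by
  rw [← intervalIntegral_integral_swap]
  · simp only [integral_mul_left_eq_self]
    simp
  · have hc : Continuous (Function.uncurry fun (t : ℝ) (g : G3) => f (R t * g)) := by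
      unfold Function.uncurry; fun_prop
    obtain ⟨C, hC⟩ := (isCompact_range hf).isBounded.exists_norm_le
    have : IsFiniteMeasure ((volume : Measure ℝ).restrict (Set.uIoc 0 (2*π))) :=
      ⟨by simp [Set.uIoc]⟩
    refine Integrable.of_bound hc.aestronglyMeasurable C (Filter.Eventually.of_forall ?_)
    intro p
    exact hC _ ⟨_, rfl⟩


lemma sin_int_pos (m : ℕ) : 0 < ∫ t in (0:ℝ)..(2*π), sin t ^ (2*m) := by
  have hp := pi_pos
  refine intervalIntegral.integral_pos (by positivity) (by fun_prop)
    (fun x _ => by rw [pow_mul]; positivity) ⟨π/2, ⟨by positivity, by linarith⟩, by simp⟩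

lemma trig_avg (m : ℕ) (al be A B C : ℝ) :
    (2*m+2) * ∫ t in (0:ℝ)..(2*π), (-sin t * al + cos t * be)^(2*m) *
      (cos t ^2 * A + 2 * (sin t * cos t) * B + sin t ^2 * C)
    = (∫ t in (0:ℝ)..(2*π), sin t ^ (2*m)) *
      ((al^2+be^2)^m * (A + C) + 2 * (m * (al^2+be^2)^(m-1)) *
        ((al^2+be^2) * (A+C) - (al^2*A + 2*(al*be)*B + be^2 * C))) := by
  obtain ⟨r, th, h1, h2⟩ : ∃ r th : ℝ, al = r * cos th ∧ be = r * sin th :=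
    ⟨‖(⟨al, be⟩ : ℂ)‖, Complex.arg ⟨al, be⟩, by rw [Complex.norm_mul_cos_arg],
      by rw [Complex.norm_mul_sin_arg]⟩
  have hr : al^2+be^2 = r^2 := by
    rw [h1, h2]; linear_combination r^2 * sin_sq_add_cos_sq th
  set A' := cos th^2*A + 2*(sin th * cos th)*B + sin th^2*C with hA'
  set C' := sin th^2*A - 2*(sin th * cos th)*B + cos th^2*C with hC'
  set B' := -(sin th * cos th)*A + (cos th^2 - sin th^2)*B + (sin th * cos th)*C with hB'
  have hper : Function.Periodic (fun t => (-sin t * al + cos t * be)^(2*m) *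
      (cos t ^2 * A + 2 * (sin t * cos t) * B + sin t ^2 * C)) (2*π) := by
    intro t; simp
  have e1 := hper.intervalIntegral_add_eq 0 th
  rw [zero_add] at e1
  rw [e1]
  have e2 := intervalIntegral.integral_comp_add_right (a := 0) (b := 2*π)
    (fun t => (-sin t * al + cos t * be)^(2*m) *
      (cos t ^2 * A + 2 * (sin t * cos t) * B + sin t ^2 * C)) th
  rw [zero_add, add_comm (2*π) th] at e2
  rw [← e2]
  have e3 : ∀ t : ℝ, (-sin (t+th) * al + cos (t+th) * be)^(2*m) *
      (cos (t+th) ^2 * A + 2 * (sin (t+th) * cos (t+th)) * B + sin (t+th) ^2 * C)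
      = (r^(2*m) * A') * sin t^(2*m) + (r^(2*m) * (C' - A')) * sin t ^(2*m+2)
        + (r^(2*m) * (2 * B')) * (sin t^(2*m+1) * cos t) := by
    intro t
    have : -sin (t+th) * al + cos (t+th) * be = - (r * sin t) := by
      rw [sin_add, cos_add, h1, h2]; linear_combination (-r * sin t) * sin_sq_add_cos_sq th
    rw [this, Even.neg_pow (even_two_mul m), mul_pow]
    have hq : cos (t+th) ^2 * A + 2 * (sin (t+th) * cos (t+th)) * B + sin (t+th) ^2 * C
        = A' * (1 - sin t^2) + C' * sin t^2 + 2 * B' * (sin t * cos t) := by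
      have hc : 1 - sin t^2 = cos t^2 := by linarith [sin_sq_add_cos_sq t]
      rw [hc, sin_add, cos_add, hA', hB', hC']; ring
    rw [hq]; ring
  simp_rw [e3]
  rw [intervalIntegral.integral_add, intervalIntegral.integral_add]
  rotate_left
  · exact Continuous.intervalIntegrable (by fun_prop) _ _
  · exact Continuous.intervalIntegrable (by fun_prop) _ _
  · exact Continuous.intervalIntegrable (by fun_prop) _ _
  · exact Continuous.intervalIntegrable (by fun_prop) _ _
  rw [intervalIntegral.integral_const_mul, intervalIntegral.integral_const_mul,
    intervalIntegral.integral_const_mul]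
  have z : ∫ t in (0:ℝ)..(2*π), sin t^(2*m+1) * cos t = 0 := by
    have := @integral_sin_pow_mul_cos_pow_odd 0 (2*π) (2*m+1) 0
    simpa using this
  rw [z, integral_sin_pow]
  set S := ∫ t in (0:ℝ)..(2*π), sin t ^ (2*m) with hS
  rw [hr]
  have hAC : A' + C' = A + C := by
    rw [hA', hC']; linear_combination (A + C) * sin_sq_add_cos_sq th
  have hW : al^2*A + 2*(al*be)*B + be^2 * C = r^2 * A' := by
    rw [h1, h2, hA']; ring
  rw [hW, ← hAC]
  simp only [sin_zero, sin_two_pi]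
  have hm : (2 * (m:ℝ) + 2) ≠ 0 := by positivity
  push_cast
  rcases m with _ | m
  · simp; ring
  · field_simp
    simp only [Nat.add_sub_cancel]
    push_cast
    ring_nf
lemma integral_add0 {f₁ f₂ : G3 → ℝ} (h1 : Continuous f₁) (h2 : Continuous f₂) :
    ∫ g, (f₁ g + f₂ g) ∂mu = ∫ g, f₁ g ∂mu + ∫ g, f₂ g ∂mu :=
  integral_add (intg h1) (intg h2)

@[fun_prop] lemma dotc {X : Type*} [TopologicalSpace X] {f₁ f₂ : X → Fin 3 → ℝ}
    (h1 : Continuous f₁) (h2 : Continuous f₂) : Continuous (fun z => f₁ z ⬝ᵥ f₂ z) :=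
  Continuous.dotProduct h1 h2

lemma sq_le_one (g : G3) (a : Fin 3 → ℝ) (ha : a ⬝ᵥ a = 1) : (rw3 g 0 ⬝ᵥ a)^2 ≤ 1 := by
  have := rw3_pars g a a
  rw [ha] at this
  nlinarith [sq_nonneg (rw3 g 1 ⬝ᵥ a), sq_nonneg (rw3 g 2 ⬝ᵥ a)]

lemma peak_aux (h : (Fin 3 → ℝ) → ℝ) (hc : Continuous h) (hev : ∀ x, h (-x) = h x)
    (g0 : G3) (H : ∀ k : ℕ, ∫ g, (rw3 g 0 ⬝ᵥ rw3 g0 0)^(2*k) * h (rw3 g 0) ∂mu = 0) :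
    ¬ (0 < h (rw3 g0 0)) := by
  intro hpos
  set a := rw3 g0 0 with ha
  have haa : a ⬝ᵥ a = 1 := by rw [ha, rw3_orth]; simp
  have hP : ∀ P : Polynomial ℝ, ∫ g, P.eval ((rw3 g 0 ⬝ᵥ a)^2) * h (rw3 g 0) ∂mu = 0 := by
    intro P
    induction P using Polynomial.induction_on' with
    | add p q hp hq =>
      simp only [Polynomial.eval_add, add_mul]
      rw [integral_add0 (by fun_prop) (by fun_prop), hp, hq, add_zero]
    | monomial m c =>
      simp only [Polynomial.eval_monomial, mul_assoc, ← pow_mul]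
      rw [MeasureTheory.integral_const_mul, H, mul_zero]
  have hrho : ∀ ρ : ℝ → ℝ, Continuous ρ → ∫ g, ρ ((rw3 g 0 ⬝ᵥ a)^2) * h (rw3 g 0) ∂mu = 0 := by
    intro ρ hρ
    obtain ⟨C, hC⟩ := (isCompact_range (f := fun g : G3 => h (rw3 g 0)) (by fun_prop)).isBounded.exists_norm_le
    have hC0 : 0 ≤ C := le_trans (norm_nonneg _) (hC _ ⟨g0, rfl⟩)
    by_contra hne
    have hne' := abs_pos.mpr hne
    set I := ∫ g, ρ ((rw3 g 0 ⬝ᵥ a)^2) * h (rw3 g 0) ∂mu with hI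
    set K := C * (mu.real Set.univ) + 1 with hK
    have hK0 : 0 < K := by positivity
    obtain ⟨P, hPn⟩ := exists_polynomial_near_of_continuousOn 0 1 ρ hρ.continuousOn
      (|I| / (2 * K)) (by positivity)
    have e : I = ∫ g, (ρ ((rw3 g 0 ⬝ᵥ a)^2) - P.eval ((rw3 g 0 ⬝ᵥ a)^2)) * h (rw3 g 0) ∂mu := by
      simp only [sub_mul]
      rw [integral_sub (intg (by fun_prop)) (intg (by fun_prop)), hP, sub_zero]
    have b : ‖∫ g, (ρ ((rw3 g 0 ⬝ᵥ a)^2) - P.eval ((rw3 g 0 ⬝ᵥ a)^2)) * h (rw3 g 0) ∂mu‖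
        ≤ (|I| / (2 * K) * C) * mu.real Set.univ := by
      apply MeasureTheory.norm_integral_le_of_norm_le_const
      refine Filter.Eventually.of_forall fun g => ?_
      rw [norm_mul]
      have := (hPn ((rw3 g 0 ⬝ᵥ a)^2) ⟨sq_nonneg _, sq_le_one g a haa⟩).le
      rw [abs_sub_comm] at this
      exact mul_le_mul this (hC _ ⟨g, rfl⟩) (norm_nonneg _) (by positivity)
    rw [← e, Real.norm_eq_abs] at b
    have : |I| / (2 * K) * C * mu.real Set.univ ≤ |I| / 2 := by
      have : |I| / (2 * K) * C * mu.real Set.univ = |I|/2 * ((C * mu.real Set.univ) / K) := by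
        field_simp
      rw [this]
      have : (C * mu.real Set.univ) / K ≤ 1 := by
        rw [div_le_one hK0]; linarith
      nlinarith
    linarith
  obtain ⟨δ, hδ, hd⟩ := Metric.continuous_iff.mp hc a (h a) hpos
  have key : ∀ x : Fin 3 → ℝ, x ⬝ᵥ x = 1 → 1 - δ^2/2 < x ⬝ᵥ a → 0 < h x := by
    intro x hx hxa
    have : dist x a < δ := by
      rw [dist_pi_lt_iff hδ]
      intro i
      rw [Real.dist_eq]
      apply abs_lt_of_sq_lt_sq _ hδ.le
      have e : (x i - a i)^2 ≤ ∑ j, (x j - a j)^2 :=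
        Finset.single_le_sum (f := fun j => (x j - a j)^2) (fun j _ => sq_nonneg _) (Finset.mem_univ i)
      simp only [dotProduct, Fin.sum_univ_three] at hx hxa haa e
      nlinarith
    have := hd x this
    rw [Real.dist_eq] at this
    linarith [(abs_lt.mp this).1]
  have key2 : ∀ g : G3, 1 - δ^2/2 < (rw3 g 0 ⬝ᵥ a)^2 → 0 < h (rw3 g 0) := by
    intro g hg
    have h1 := sq_le_one g a haa
    have h2 : rw3 g 0 ⬝ᵥ rw3 g 0 = 1 := by rw [rw3_orth]; simp
    have habs : |rw3 g 0 ⬝ᵥ a| ≤ 1 := (sq_le_one_iff_abs_le_one _).mp h1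
    have hle : (rw3 g 0 ⬝ᵥ a)^2 ≤ |rw3 g 0 ⬝ᵥ a| := by
      rw [← sq_abs]; nlinarith [abs_nonneg (rw3 g 0 ⬝ᵥ a)]
    rcases le_total 0 (rw3 g 0 ⬝ᵥ a) with h0 | h0
    · rw [abs_of_nonneg h0] at hle
      exact key _ h2 (by linarith)
    · rw [abs_of_nonpos h0] at hle
      rw [← hev]
      exact key _ (by simpa using h2) (by rw [neg_dotProduct]; linarith)
  have hz := hrho (fun y => max (y - (1 - δ^2/2)) 0) (by fun_prop)
  have hp : 0 < ∫ g, (fun y => max (y - (1 - δ^2/2)) 0) ((rw3 g 0 ⬝ᵥ a)^2) * h (rw3 g 0) ∂mu := by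
    refine Continuous.integral_pos_of_hasCompactSupport_nonneg_nonzero (x := g0) (by fun_prop)
      (HasCompactSupport.of_compactSpace _) ?_ ?_
    · intro g
      simp only [Pi.zero_apply]
      rcases le_or_gt ((rw3 g 0 ⬝ᵥ a)^2) (1 - δ^2/2) with h1 | h1
      · rw [max_eq_right (by linarith), zero_mul]
      · exact mul_nonneg (le_max_right _ _) (key2 g h1).le
    · simp only [← ha, haa]
      refine mul_ne_zero ?_ hpos.ne'
      have : 0 < 1 ^ 2 - (1 - δ^2/2) := by ring_nf; positivity
      exact (lt_max_of_lt_left this).ne'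
  linarith

lemma peak (h : (Fin 3 → ℝ) → ℝ) (hc : Continuous h) (hev : ∀ x, h (-x) = h x)
    (g0 : G3) (H : ∀ k : ℕ, ∫ g, (rw3 g 0 ⬝ᵥ rw3 g0 0)^(2*k) * h (rw3 g 0) ∂mu = 0) :
    h (rw3 g0 0) = 0 := by
  have h1 := peak_aux h hc hev g0 H
  have h2 := peak_aux (fun x => - h x) hc.neg (fun x => by rw [hev]) g0 (by
    intro k
    simp only [mul_neg, MeasureTheory.integral_neg, H, neg_zero])
  linarith

lemma deriv_lem (k : ℕ) (s σ A B C : G3 → ℝ) (hs : Continuous s) (hσ : Continuous σ)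
    (hA : Continuous A) (hB : Continuous B) (hC : Continuous C)
    (H : ∀ t : ℝ, ∫ g, (s g + t * σ g)^k * (A g + t * B g + t^2 * C g) ∂mu = 0) :
    ∫ g, (k * s g^(k-1) * σ g * A g + s g ^k * B g) ∂mu = 0 := by
  let F' : ℝ → G3 → ℝ := fun t g => (k * (s g + t * σ g)^(k-1) * σ g) * (A g + t * B g + t^2 * C g)
    + (s g + t * σ g)^k * (B g + 2 * t * C g)
  have hF'c : Continuous (Function.uncurry F') := by
    simp only [F']; unfold Function.uncurry; fun_prop
  obtain ⟨K, hK⟩ := ((isCompact_Icc (a := (-1:ℝ)) (b := 1)).prod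
    (isCompact_univ (X := G3))).exists_bound_of_continuousOn hF'c.continuousOn
  have := (hasDerivAt_integral_of_dominated_loc_of_deriv_le (μ := mu)
    (F := fun t g => (s g + t * σ g)^k * (A g + t * B g + t^2 * C g)) (F' := F') (x₀ := (0:ℝ))
    (s := Set.Icc (-1) 1) (bound := fun _ => K) (Icc_mem_nhds (by norm_num) (by norm_num))
    (Filter.Eventually.of_forall fun t => Continuous.aestronglyMeasurable (by fun_prop))
    (intg (by fun_prop)) (Continuous.aestronglyMeasurable (by simp only [F']; fun_prop))
    (Filter.Eventually.of_forall fun g t ht => hK (t, g) ⟨ht, Set.mem_univ _⟩)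
    (intg continuous_const)
    (Filter.Eventually.of_forall fun g t _ => by
      have h1 : HasDerivAt (fun t : ℝ => s g + t * σ g) (σ g) t := by
        simpa using ((hasDerivAt_id t).mul_const (σ g)).const_add (s g)
      have h2 : HasDerivAt (fun t : ℝ => A g + t * B g + t^2 * C g) (B g + 2 * t * C g) t := by
        have h3 := (((hasDerivAt_id t).mul_const (B g)).const_add (A g)).add
          (((hasDerivAt_id t).pow 2).mul_const (C g))
        refine (h3.congr_deriv ?_)
        simp
      exact (h1.pow k).mul h2)).2
  simp only [H] at this
  have h0 := this.unique (hasDerivAt_const 0 0)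
  simpa [F'] using h0
/-- The bilinear form with matrix `M x`. -/
def q (M : (Fin 3 → ℝ) → Matrix (Fin 3) (Fin 3) ℝ) (x u v : Fin 3 → ℝ) : ℝ := u ⬝ᵥ M x *ᵥ v

@[fun_prop] lemma q_cont {X : Type*} [TopologicalSpace X]
    {M : (Fin 3 → ℝ) → Matrix (Fin 3) (Fin 3) ℝ} (hM : Continuous M)
    {x u v : X → Fin 3 → ℝ} (hx : Continuous x) (hu : Continuous u) (hv : Continuous v) :
    Continuous (fun z => q M (x z) (u z) (v z)) := by
  unfold q
  exact Continuous.dotProduct hu (Continuous.matrix_mulVec (hM.comp hx) hv)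

section
variable (M : (Fin 3 → ℝ) → Matrix (Fin 3) (Fin 3) ℝ) (x u v w : Fin 3 → ℝ) (c : ℝ)
lemma q_addl : q M x (u + v) w = q M x u w + q M x v w := by simp [q, add_dotProduct]
lemma q_addr : q M x w (u + v) = q M x w u + q M x w v := by
  simp [q, mulVec_add, dotProduct_add]
lemma q_smull : q M x (c • u) w = c * q M x u w := by simp [q]
lemma q_smulr : q M x w (c • u) = c * q M x w u := by simp [q, mulVec_smul]
lemma q_symm (hs : ∀ x, (M x)ᵀ = M x) : q M x u v = q M x v u := by
  unfold q
  rw [dotProduct_mulVec, ← mulVec_transpose, hs, dotProduct_comm]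

/-- tangential part -/
def bt : ℝ := q M x (u + (-(x ⬝ᵥ u)) • x) (v + (-(x ⬝ᵥ v)) • x)

lemma bt_addl : bt M x (u + c • v) w = bt M x u w + c * bt M x v w := by
  have : (u + c • v) + (-(x ⬝ᵥ (u + c • v))) • x
    = (u + (-(x ⬝ᵥ u)) • x) + c • (v + (-(x ⬝ᵥ v)) • x) := by
    rw [dotProduct_add, dotProduct_smul, smul_eq_mul]; module
  unfold bt
  rw [this, q_addl, q_smull]
lemma bt_symm (hs : ∀ x, (M x)ᵀ = M x) : bt M x u v = bt M x v u := by
  unfold bt; rw [q_symm _ _ _ _ hs]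
end

@[fun_prop] lemma bt_cont {X : Type*} [TopologicalSpace X]
    {M : (Fin 3 → ℝ) → Matrix (Fin 3) (Fin 3) ℝ} (hM : Continuous M)
    {x u v : X → Fin 3 → ℝ} (hx : Continuous x) (hu : Continuous u) (hv : Continuous v) :
    Continuous (fun z => bt M (x z) (u z) (v z)) := by
  unfold bt
  fun_prop

lemma bt_frame {M : (Fin 3 → ℝ) → Matrix (Fin 3) (Fin 3) ℝ} (hs : ∀ x, (M x)ᵀ = M x)
    (g : G3) (a : Fin 3 → ℝ) :
    bt M (rw3 g 0) a a = (rw3 g 1 ⬝ᵥ a)^2 * q M (rw3 g 0) (rw3 g 1) (rw3 g 1)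
      + 2 * ((rw3 g 1 ⬝ᵥ a) * (rw3 g 2 ⬝ᵥ a)) * q M (rw3 g 0) (rw3 g 1) (rw3 g 2)
      + (rw3 g 2 ⬝ᵥ a)^2 * q M (rw3 g 0) (rw3 g 2) (rw3 g 2) := by
  have e : a + (-(rw3 g 0 ⬝ᵥ a)) • rw3 g 0
      = (rw3 g 1 ⬝ᵥ a) • rw3 g 1 + (rw3 g 2 ⬝ᵥ a) • rw3 g 2 := by
    ext i
    have := rw3_pars g a (Pi.single i 1)
    simp only [dotProduct_single, mul_one] at this
    simp only [Pi.add_apply, Pi.smul_apply, smul_eq_mul]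
    linarith
  unfold bt
  rw [e]
  simp only [q_addl, q_addr, q_smull, q_smulr]
  rw [q_symm M _ (rw3 g 2) (rw3 g 1) hs]
  ring

lemma trace_frame (A : Matrix (Fin 3) (Fin 3) ℝ) (g : G3) :
    rw3 g 0 ⬝ᵥ A *ᵥ rw3 g 0 + rw3 g 1 ⬝ᵥ A *ᵥ rw3 g 1 + rw3 g 2 ⬝ᵥ A *ᵥ rw3 g 2 = A.trace := by
  have h : (g : Matrix (Fin 3) (Fin 3) ℝ)ᵀ * (g : Matrix (Fin 3) (Fin 3) ℝ) = 1 :=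
    (Matrix.mem_orthogonalGroup_iff' _ _).mp g.2
  have : ((g : Matrix (Fin 3) (Fin 3) ℝ) * (A * (g : Matrix (Fin 3) (Fin 3) ℝ)ᵀ)).trace
      = A.trace := by
    rw [Matrix.trace_mul_comm, Matrix.mul_assoc, h, Matrix.mul_one]
  rw [← this]
  simp [Matrix.trace, Matrix.mul_apply, Fin.sum_univ_three, dotProduct, mulVec, rw3]

theorem core (M : (Fin 3 → ℝ) → Matrix (Fin 3) (Fin 3) ℝ) (hM : Continuous M)
    (hs : ∀ x, (M x)ᵀ = M x) (he : ∀ x, M (-x) = M x)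
    (h : ∀ u v b c : Fin 3 → ℝ, u ⬝ᵥ u = 1 → v ⬝ᵥ v = 1 → u ⬝ᵥ v = 0 →
      ∫ t in (0:ℝ)..(2*π), ((cos t • u + sin t • v) ⬝ᵥ b) * ((cos t • u + sin t • v) ⬝ᵥ c) *
        q M (cos t • u + sin t • v) ((-sin t) • u + cos t • v) ((-sin t) • u + cos t • v) = 0)
    (g0 : G3) : q M (rw3 g0 0) (rw3 g0 1) (rw3 g0 1) = 0 := by
  have hpi : (2 * π) ≠ 0 := by positivity
  -- Step 1
  have S1 : ∀ (a b c : Fin 3 → ℝ) (m : ℕ), ∫ g, (rw3 g 2 ⬝ᵥ a)^(2*m) *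
      ((rw3 g 0 ⬝ᵥ b) * (rw3 g 0 ⬝ᵥ c) * q M (rw3 g 0) (rw3 g 1) (rw3 g 1)) ∂mu = 0 := by
    intro a b c m
    have e := avg rot01 rot01_cont (fun g => (rw3 g 2 ⬝ᵥ a)^(2*m) *
      ((rw3 g 0 ⬝ᵥ b) * (rw3 g 0 ⬝ᵥ c) * q M (rw3 g 0) (rw3 g 1) (rw3 g 1))) (by fun_prop)
    have z : ∀ g : G3, ∫ t in (0:ℝ)..(2*π), (rw3 (rot01 t * g) 2 ⬝ᵥ a)^(2*m) *
      ((rw3 (rot01 t * g) 0 ⬝ᵥ b) * (rw3 (rot01 t * g) 0 ⬝ᵥ c) *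
        q M (rw3 (rot01 t * g) 0) (rw3 (rot01 t * g) 1) (rw3 (rot01 t * g) 1)) = 0 := by
      intro g
      simp only [rot01_0, rot01_1, rot01_2]
      rw [intervalIntegral.integral_const_mul, h, mul_zero] <;> rw [rw3_orth] <;> simp
    simp only [z] at e
    simpa [hpi, pi_ne_zero] using e
  -- Step 2
  let r : (Fin 3 → ℝ) → G3 → ℝ := fun a g => (rw3 g 1 ⬝ᵥ a)^2 + (rw3 g 2 ⬝ᵥ a)^2
  let T : G3 → ℝ := fun g => q M (rw3 g 0) (rw3 g 1) (rw3 g 1) + q M (rw3 g 0) (rw3 g 2) (rw3 g 2)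
  let Hh : (Fin 3 → ℝ) → G3 → ℝ := fun a g => r a g * T g - bt M (rw3 g 0) a a
  have hrc : ∀ a, Continuous (r a) := fun a => by simp only [r]; fun_prop
  have hTc : Continuous T := by simp only [T]; fun_prop
  have hHc : ∀ a, Continuous (Hh a) := fun a => by
    have := hrc a
    simp only [Hh]; fun_prop
  have S2 : ∀ (a b c : Fin 3 → ℝ) (m : ℕ), ∫ g, (rw3 g 0 ⬝ᵥ b) * (rw3 g 0 ⬝ᵥ c) *
      (r a g ^ m * T g + 2 * (m * r a g ^ (m-1)) * Hh a g) ∂mu = 0 := by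
    intro a b c m
    have e := avg rot12 rot12_cont (fun g => (rw3 g 2 ⬝ᵥ a)^(2*m) *
      ((rw3 g 0 ⬝ᵥ b) * (rw3 g 0 ⬝ᵥ c) * q M (rw3 g 0) (rw3 g 1) (rw3 g 1))) (by fun_prop)
    rw [S1, mul_zero] at e
    set S := ∫ t in (0:ℝ)..(2*π), sin t ^ (2*m) with hS
    have hSp : 0 < S := sin_int_pos m
    have z : ∀ g : G3, ∫ t in (0:ℝ)..(2*π), (rw3 (rot12 t * g) 2 ⬝ᵥ a)^(2*m) *
      ((rw3 (rot12 t * g) 0 ⬝ᵥ b) * (rw3 (rot12 t * g) 0 ⬝ᵥ c) *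
        q M (rw3 (rot12 t * g) 0) (rw3 (rot12 t * g) 1) (rw3 (rot12 t * g) 1))
        = (S / (2*m+2)) * ((rw3 g 0 ⬝ᵥ b) * (rw3 g 0 ⬝ᵥ c) *
      (r a g ^ m * T g + 2 * (m * r a g ^ (m-1)) * Hh a g)) := by
      intro g
      have ta := trig_avg m (rw3 g 1 ⬝ᵥ a) (rw3 g 2 ⬝ᵥ a) (q M (rw3 g 0) (rw3 g 1) (rw3 g 1))
        (q M (rw3 g 0) (rw3 g 1) (rw3 g 2)) (q M (rw3 g 0) (rw3 g 2) (rw3 g 2))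
      rw [← bt_frame hs, ← hS] at ta
      simp only [rot12_0, rot12_1, rot12_2]
      have e1 : ∀ t : ℝ, (((-sin t) • rw3 g 1 + cos t • rw3 g 2) ⬝ᵥ a) ^ (2 * m) *
          (rw3 g 0 ⬝ᵥ b * rw3 g 0 ⬝ᵥ c *
            q M (rw3 g 0) (cos t • rw3 g 1 + sin t • rw3 g 2) (cos t • rw3 g 1 + sin t • rw3 g 2))
          = (rw3 g 0 ⬝ᵥ b * rw3 g 0 ⬝ᵥ c) *
            ((-sin t * (rw3 g 1 ⬝ᵥ a) + cos t * (rw3 g 2 ⬝ᵥ a)) ^ (2 * m) *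
      (cos t ^ 2 * q M (rw3 g 0) (rw3 g 1) (rw3 g 1) +
        2 * (sin t * cos t) * q M (rw3 g 0) (rw3 g 1) (rw3 g 2) +
        sin t ^ 2 * q M (rw3 g 0) (rw3 g 2) (rw3 g 2))) := by
        intro t
        simp only [q_addl, q_addr, q_smull, q_smulr, add_dotProduct, smul_dotProduct, smul_eq_mul]
        rw [q_symm M _ (rw3 g 2) (rw3 g 1) hs]
        ring
      simp only [e1]
      rw [intervalIntegral.integral_const_mul]
      have hm : (2 * (m:ℝ) + 2) ≠ 0 := by positivity
      have ta' := (eq_div_iff hm).mpr ((mul_comm _ _).trans ta)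
      rw [ta']
      simp only [r, T, Hh]
      ring
    simp only [z] at e
    rw [MeasureTheory.integral_const_mul] at e
    have : S / (2*m+2) ≠ 0 := by positivity
    exact (mul_eq_zero.mp e.symm).resolve_left this
  -- Step 3
  have S3 : ∀ (a b c : Fin 3 → ℝ) (P : Polynomial ℝ), ∫ g, (rw3 g 0 ⬝ᵥ b) * (rw3 g 0 ⬝ᵥ c) *
      (P.eval (r a g) * T g + 2 * (P.derivative.eval (r a g)) * Hh a g) ∂mu = 0 := by
    intro a b c P
    have h1 := hrc a
    have h2 := hHc a
    induction P using Polynomial.induction_on' with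
    | add p₁ p₂ hp hq =>
      have := integral_add0 (f₁ := fun g => (rw3 g 0 ⬝ᵥ b) * (rw3 g 0 ⬝ᵥ c) *
        (p₁.eval (r a g) * T g + 2 * (p₁.derivative.eval (r a g)) * Hh a g))
        (f₂ := fun g => (rw3 g 0 ⬝ᵥ b) * (rw3 g 0 ⬝ᵥ c) *
        (p₂.eval (r a g) * T g + 2 * (p₂.derivative.eval (r a g)) * Hh a g))
        (by fun_prop) (by fun_prop)
      rw [hp, hq, add_zero] at this
      rw [← this]
      congr 1; ext g
      simp only [Polynomial.derivative_add, Polynomial.eval_add]; ring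
    | monomial m d =>
      have := S2 a b c m
      rw [← mul_zero d, ← this, ← MeasureTheory.integral_const_mul]
      congr 1; ext g
      simp only [Polynomial.derivative_monomial, Polynomial.eval_monomial]; ring
  -- Step 4
  have hr1 : ∀ a : Fin 3 → ℝ, a ⬝ᵥ a = 1 → ∀ g, 1 - r a g = (rw3 g 0 ⬝ᵥ a)^2 := by
    intro a ha g
    have := rw3_pars g a a
    simp only [r]; rw [← ha]; linarith
  have S4 : ∀ (a b c : Fin 3 → ℝ) (k : ℕ), a ⬝ᵥ a = 1 → ∫ g, (rw3 g 0 ⬝ᵥ b) * (rw3 g 0 ⬝ᵥ c) *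
      ((rw3 g 0 ⬝ᵥ a)^(2*k) * T g - 2 * k * (rw3 g 0 ⬝ᵥ a)^(2*(k-1)) * Hh a g) ∂mu = 0 := by
    intro a b c k ha
    rw [← S3 a b c ((1 - Polynomial.X)^k)]
    congr 1; ext g
    simp only [Polynomial.derivative_pow, Polynomial.eval_mul, Polynomial.eval_pow,
      Polynomial.eval_sub, Polynomial.eval_one, Polynomial.eval_X, Polynomial.derivative_sub,
      Polynomial.derivative_one, Polynomial.derivative_X, hr1 a ha, Polynomial.eval_C,
      Polynomial.eval_zero, ← pow_mul]
    ring
  have sum3 : ∀ f : G3 → ℝ, Continuous f →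
      (∀ b c : Fin 3 → ℝ, ∫ g, (rw3 g 0 ⬝ᵥ b) * (rw3 g 0 ⬝ᵥ c) * f g ∂mu = 0) →
      ∫ g, f g ∂mu = 0 := by
    intro f hf hb
    have e : ∀ g, f g = ∑ i : Fin 3, (rw3 g 0 ⬝ᵥ Pi.single i 1) * (rw3 g 0 ⬝ᵥ Pi.single i 1) * f g := by
      intro g
      rw [← Finset.sum_mul]
      have := rw3_orth g 0 0
      simp only [dotProduct] at this
      simp [this]
    have e' : ∫ g, f g ∂mu = ∫ g, ∑ i : Fin 3,
        (rw3 g 0 ⬝ᵥ Pi.single i 1) * (rw3 g 0 ⬝ᵥ Pi.single i 1) * f g ∂mu := by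
      congr 1; exact funext e
    rw [e', MeasureTheory.integral_finsetSum _ (fun i _ => intg (by fun_prop))]
    exact Finset.sum_eq_zero fun i _ => hb (Pi.single i 1) (Pi.single i 1)
  have S4' : ∀ (a : Fin 3 → ℝ) (k : ℕ), a ⬝ᵥ a = 1 → ∫ g,
      ((rw3 g 0 ⬝ᵥ a)^(2*k) * T g - 2 * k * (rw3 g 0 ⬝ᵥ a)^(2*(k-1)) * Hh a g) ∂mu = 0 := by
    intro a k ha
    have h2 := hHc a
    exact sum3 _ (by fun_prop) fun b c => S4 a b c k ha
  -- Step 5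
  have S5 : ∀ (a : Fin 3 → ℝ) (k : ℕ), a ⬝ᵥ a = 1 →
      ∫ g, (rw3 g 0 ⬝ᵥ a)^(2*k) * Hh a g ∂mu = 0 := by
    intro a k ha
    have h2 := hHc a
    have e1 := S4 a a a k ha
    have e2 := S4' a (k+1) ha
    have e3 := integral_sub (μ := mu) (intg (f := fun g => (rw3 g 0 ⬝ᵥ a) * (rw3 g 0 ⬝ᵥ a) *
      ((rw3 g 0 ⬝ᵥ a)^(2*k) * T g - 2 * k * (rw3 g 0 ⬝ᵥ a)^(2*(k-1)) * Hh a g)) (by fun_prop))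
      (intg (f := fun g => ((rw3 g 0 ⬝ᵥ a)^(2*(k+1)) * T g - 2 * (k+1 : ℕ) *
        (rw3 g 0 ⬝ᵥ a)^(2*(k+1-1)) * Hh a g)) (by fun_prop))
    rw [e1, e2, sub_zero] at e3
    have e4 : (2:ℝ) * ∫ g, (rw3 g 0 ⬝ᵥ a)^(2*k) * Hh a g ∂mu = 0 := by
      rw [← e3, ← MeasureTheory.integral_const_mul]
      congr 1; ext g
      rcases k with _ | k
      · simp; ring
      · simp only [Nat.add_sub_cancel]; push_cast; ring
    linarith
  have S5T : ∀ (a : Fin 3 → ℝ) (k : ℕ), a ⬝ᵥ a = 1 →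
      ∫ g, (rw3 g 0 ⬝ᵥ a)^(2*k) * T g ∂mu = 0 := by
    intro a k ha
    have h2 := hHc a
    have e := S4' a k ha
    rw [integral_sub (intg (by fun_prop)) (intg (by fun_prop))] at e
    simp only [mul_assoc (2 * (k:ℝ))] at e
    rw [MeasureTheory.integral_const_mul, S5 a _ ha] at e
    linarith
  have hx1 : ∀ g : G3, rw3 g 0 ⬝ᵥ rw3 g 0 = 1 := fun g => by rw [rw3_orth]; simp
  have T0 : ∀ g, T g = 0 := by
    have eT : ∀ g, T g = (M (rw3 g 0)).trace - q M (rw3 g 0) (rw3 g 0) (rw3 g 0) := by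
      intro g
      rw [← trace_frame _ g]
      simp only [T, q]; ring
    intro g
    rw [eT]
    refine peak (fun x => (M x).trace - q M x x x) ?_ ?_ g ?_
    · have : Continuous fun x => (M x).trace := Continuous.matrix_trace hM
      fun_prop
    · intro x
      simp [q, he, mulVec_neg]
    · intro k
      simp only [← eT]
      exact S5T _ k (hx1 g)
  -- Step 6
  have S6 : ∀ (a b c : Fin 3 → ℝ) (k : ℕ), a ⬝ᵥ a = 1 → ∫ g, (rw3 g 0 ⬝ᵥ b) * (rw3 g 0 ⬝ᵥ c) *
      ((rw3 g 0 ⬝ᵥ a)^(2*k) * bt M (rw3 g 0) a a) ∂mu = 0 := by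
    intro a b c k ha
    have e := S4 a b c (k+1) ha
    have e4 : (2 * (k+1) : ℝ) * ∫ g, (rw3 g 0 ⬝ᵥ b) * (rw3 g 0 ⬝ᵥ c) *
      ((rw3 g 0 ⬝ᵥ a)^(2*k) * bt M (rw3 g 0) a a) ∂mu = 0 := by
      rw [← e, ← MeasureTheory.integral_const_mul]
      congr 1; ext g
      simp only [Hh, T0, Nat.add_sub_cancel]; push_cast; ring
    exact (mul_eq_zero.mp e4).resolve_left (by positivity)
  -- Step 7
  have S7 : ∀ (a b c : Fin 3 → ℝ) (k : ℕ), ∫ g, (rw3 g 0 ⬝ᵥ b) * (rw3 g 0 ⬝ᵥ c) *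
      ((rw3 g 0 ⬝ᵥ a)^(2*k) * bt M (rw3 g 0) a a) ∂mu = 0 := by
    intro a b c k
    by_cases ha : a = 0
    · subst ha
      simp [bt, q]
    · have hp : 0 < a ⬝ᵥ a :=
        lt_of_le_of_ne (by simp only [dotProduct]; exact Finset.sum_nonneg fun i _ => mul_self_nonneg _)
          (fun h0 => ha (dotProduct_self_eq_zero.mp h0.symm))
      set ν := √(a ⬝ᵥ a) with hν
      have hν0 : 0 < ν := Real.sqrt_pos.mpr hp
      have hν2 : ν * ν = a ⬝ᵥ a := Real.mul_self_sqrt hp.le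
      obtain ⟨a', ha'⟩ : ∃ a', a = ν • a' := ⟨ν⁻¹ • a, by rw [smul_smul, mul_inv_cancel₀ hν0.ne', one_smul]⟩
      have h1 : a' ⬝ᵥ a' = 1 := by
        rw [ha'] at hν2
        simp only [smul_dotProduct, dotProduct_smul, smul_eq_mul] at hν2
        have : ν * ν * (a' ⬝ᵥ a' - 1) = 0 := by linarith
        have := (mul_eq_zero.mp this).resolve_left (by positivity)
        linarith
      have hb : ∀ x, bt M x a a = ν^2 * bt M x a' a' := by
        intro x
        have e0 : ∀ w, bt M x a w = ν * bt M x a' w := by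
          intro w
          have := bt_addl M x 0 a' w ν
          rw [zero_add, ← ha'] at this
          rw [this]; simp [bt, q]
        rw [e0, bt_symm _ _ _ _ hs, e0]; ring
      have := S6 a' b c k h1
      rw [← mul_zero (ν^(2*k+2)), ← this, ← MeasureTheory.integral_const_mul]
      congr 1; ext g
      rw [hb, show rw3 g 0 ⬝ᵥ a = ν * (rw3 g 0 ⬝ᵥ a') by rw [ha']; simp [dotProduct_smul]]
      ring
  have S7' : ∀ (a : Fin 3 → ℝ) (k : ℕ), ∫ g,
      ((rw3 g 0 ⬝ᵥ a)^(2*k) * bt M (rw3 g 0) a a) ∂mu = 0 :=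
    fun a k => sum3 _ (by fun_prop) fun b c => S7 a b c k
  have bt2 : ∀ x a V (t : ℝ), bt M x (a + t • V) (a + t • V)
      = bt M x a a + t * (2 * bt M x a V) + t^2 * bt M x V V := by
    intro x a V t
    rw [bt_addl, bt_symm M x a _ hs, bt_symm M x V (a + t • V) hs, bt_addl, bt_addl,
      bt_symm M x V a hs]
    ring
  -- Step 8
  have S8 : ∀ (a V : Fin 3 → ℝ) (k : ℕ), ∫ g, (rw3 g 0 ⬝ᵥ V) * (rw3 g 0 ⬝ᵥ a)^(2*k+1) *
      bt M (rw3 g 0) a V ∂mu = 0 := by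
    intro a V k
    have d := deriv_lem (2*k) (fun g => rw3 g 0 ⬝ᵥ a) (fun g => rw3 g 0 ⬝ᵥ V)
      (fun g => (rw3 g 0 ⬝ᵥ V) * (rw3 g 0 ⬝ᵥ a) * bt M (rw3 g 0) a a)
      (fun g => (rw3 g 0 ⬝ᵥ V) * (rw3 g 0 ⬝ᵥ a) * (2 * bt M (rw3 g 0) a V))
      (fun g => (rw3 g 0 ⬝ᵥ V) * (rw3 g 0 ⬝ᵥ a) * bt M (rw3 g 0) V V)
      (by fun_prop) (by fun_prop) (by fun_prop) (by fun_prop) (by fun_prop) (by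
        intro t
        rw [← S7 (a + t • V) V a k]
        congr 1; ext g
        rw [bt2, dotProduct_add, dotProduct_smul, smul_eq_mul]; ring)
    rw [integral_add0 (by fun_prop) (by fun_prop)] at d
    have d1 : ∫ g, ((2*k : ℕ):ℝ) * (rw3 g 0 ⬝ᵥ a)^(2*k-1) * (rw3 g 0 ⬝ᵥ V) *
        ((rw3 g 0 ⬝ᵥ V) * (rw3 g 0 ⬝ᵥ a) * bt M (rw3 g 0) a a) ∂mu = 0 := by
      rw [← mul_zero (2 * k : ℝ), ← S7 a V V k, ← MeasureTheory.integral_const_mul]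
      congr 1; ext g
      rcases k with _ | k
      · simp
      · rw [show 2 * (k+1) - 1 = 2*k+1 by omega]; push_cast; ring
    rw [d1, zero_add] at d
    have : (2:ℝ) * ∫ g, (rw3 g 0 ⬝ᵥ V) * (rw3 g 0 ⬝ᵥ a)^(2*k+1) * bt M (rw3 g 0) a V ∂mu = 0 := by
      rw [← d, ← MeasureTheory.integral_const_mul]
      congr 1; ext g; ring
    linarith
  -- Step 9
  have S9 : ∀ (a V : Fin 3 → ℝ) (k : ℕ), ∫ g, (rw3 g 0 ⬝ᵥ a)^(2*k) *
      bt M (rw3 g 0) a V ∂mu = 0 := by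
    intro a V k
    have d := deriv_lem (2*k) (fun g => rw3 g 0 ⬝ᵥ a) (fun g => rw3 g 0 ⬝ᵥ V)
      (fun g => bt M (rw3 g 0) a a) (fun g => 2 * bt M (rw3 g 0) a V)
      (fun g => bt M (rw3 g 0) V V)
      (by fun_prop) (by fun_prop) (by fun_prop) (by fun_prop) (by fun_prop) (by
        intro t
        rw [← S7' (a + t • V) k]
        congr 1; ext g
        rw [bt2, dotProduct_add, dotProduct_smul, smul_eq_mul])
    rw [integral_add0 (by fun_prop) (by fun_prop)] at d
    have d1 : ∫ g, ((2*k : ℕ):ℝ) * (rw3 g 0 ⬝ᵥ a)^(2*k-1) * (rw3 g 0 ⬝ᵥ V) *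
        (bt M (rw3 g 0) a a) ∂mu = 0 := by
      rw [← mul_zero (2 * k : ℝ), ← S7 a V a (k-1), ← MeasureTheory.integral_const_mul]
      congr 1; ext g
      rcases k with _ | k
      · simp
      · rw [show 2 * (k+1) - 1 = 2*k+1 by omega, Nat.add_sub_cancel]; push_cast; ring
    rw [d1, zero_add] at d
    have : (2:ℝ) * ∫ g, (rw3 g 0 ⬝ᵥ a)^(2*k) * bt M (rw3 g 0) a V ∂mu = 0 := by
      rw [← d, ← MeasureTheory.integral_const_mul]
      congr 1; ext g; ring
    linarith
  -- Step 10
  have S10 : ∀ (a V : Fin 3 → ℝ) (k : ℕ), ∫ g, (rw3 g 0 ⬝ᵥ a)^(2*k) *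
      bt M (rw3 g 0) V V ∂mu = 0 := by
    intro a V k
    have d := deriv_lem (2*k) (fun g => rw3 g 0 ⬝ᵥ a) (fun g => rw3 g 0 ⬝ᵥ V)
      (fun g => bt M (rw3 g 0) a V) (fun g => bt M (rw3 g 0) V V) (fun g => 0)
      (by fun_prop) (by fun_prop) (by fun_prop) (by fun_prop) (by fun_prop) (by
        intro t
        refine Eq.trans ?_ (S9 (a + t • V) V k)
        congr 1; ext g
        rw [bt_addl, dotProduct_add, dotProduct_smul, smul_eq_mul]; ring)
    rw [integral_add0 (by fun_prop) (by fun_prop)] at d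
    have d1 : ∫ g, ((2*k : ℕ):ℝ) * (rw3 g 0 ⬝ᵥ a)^(2*k-1) * (rw3 g 0 ⬝ᵥ V) *
        (bt M (rw3 g 0) a V) ∂mu = 0 := by
      rw [← mul_zero (2 * k : ℝ), ← S8 a V (k-1), ← MeasureTheory.integral_const_mul]
      congr 1; ext g
      rcases k with _ | k
      · simp
      · rw [show 2 * (k+1) - 1 = 2*k+1 by omega, Nat.add_sub_cancel]; push_cast; ring
    rw [d1, zero_add] at d
    exact d
  have fin := peak (fun x => bt M x (rw3 g0 1) (rw3 g0 1)) (by fun_prop) (fun x => by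
    simp only [bt, q, he, neg_dotProduct, neg_neg]; simp) g0 (fun k => S10 _ _ k)
  simp only [bt, rw3_orth] at fin
  simpa using fin

/-- Linear combination of three vectors. -/
noncomputable def L3 {n : ℕ} (b : Fin 3 → EuclideanSpace ℝ (Fin n)) :
    (Fin 3 → ℝ) →ₗ[ℝ] EuclideanSpace ℝ (Fin n) :=
  Fintype.linearCombination ℝ b

lemma L3_apply {n : ℕ} (b : Fin 3 → EuclideanSpace ℝ (Fin n)) (y : Fin 3 → ℝ) :
    L3 b y = ∑ i, y i • b i := rfl

lemma L3_inner {n : ℕ} {b : Fin 3 → EuclideanSpace ℝ (Fin n)} (hb : Orthonormal ℝ b)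
    (u v : Fin 3 → ℝ) : ⟪L3 b u, L3 b v⟫ = u ⬝ᵥ v := by
  rw [L3_apply, L3_apply, hb.inner_sum]
  simp [dotProduct]

lemma exists_third {n : ℕ} (hn : 3 ≤ n) (x v : EuclideanSpace ℝ (Fin n)) (hx : ‖x‖ = 1)
    (hv : ‖v‖ = 1) (hxv : ⟪x, v⟫ = 0) : ∃ z, Orthonormal ℝ ![x, v, z] := by
  obtain ⟨z, hz, hz1⟩ : ∃ z ∈ (Submodule.span ℝ {x, v})ᗮ, ‖z‖ = 1 := by
    have hne : (Submodule.span ℝ {x, v})ᗮ ≠ ⊥ := by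
      intro h0
      rw [Submodule.orthogonal_eq_bot_iff] at h0
      have h1 : Module.finrank ℝ (Submodule.span ℝ ({x, v} : Set (EuclideanSpace ℝ (Fin n)))) ≤ 2 := by
        classical
        have := finrank_span_finset_le_card (R := ℝ) ({x, v} : Finset (EuclideanSpace ℝ (Fin n)))
        simp only [Finset.coe_pair] at this
        exact this.trans Finset.card_le_two
      rw [h0, finrank_top, finrank_euclideanSpace_fin] at h1
      omega
    obtain ⟨z, hz, hz0⟩ := Submodule.exists_mem_ne_zero_of_ne_bot hne
    exact ⟨‖z‖⁻¹ • z, Submodule.smul_mem _ _ hz, by simp [norm_smul, hz0]⟩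
  have hxz : ⟪x, z⟫ = 0 := (Submodule.mem_orthogonal _ _).mp hz x (Submodule.subset_span (by simp))
  have hvz : ⟪v, z⟫ = 0 := (Submodule.mem_orthogonal _ _).mp hz v (Submodule.subset_span (by simp))
  refine ⟨z, ?_, ?_⟩
  · intro i; fin_cases i <;> simp [hx, hv, hz1]
  · intro i j hij
    have h1 := (real_inner_comm x v).trans hxv
    have h2 := (real_inner_comm x z).trans hxz
    have h3 := (real_inner_comm v z).trans hvz
    fin_cases i <;> fin_cases j <;> first | exact absurd rfl hij | simpa using by assumption

end EvenTensor

open EvenTensor Matrix in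
/-- Proposition 3.2: an even smooth symmetric 2-cotensor field on `ℝⁿ` whose
great-circle integrals weighted by all products of two coordinates vanish is zero
on tangent vectors to the unit sphere. -/
theorem even_tensor_vanishes_of_quadratic_weighted_integrals
    (n : ℕ) (hn : 3 ≤ n)
    (F : EuclideanSpace ℝ (Fin n) →
      (EuclideanSpace ℝ (Fin n) →L[ℝ] EuclideanSpace ℝ (Fin n) →L[ℝ] ℝ))
    (hF : ContDiff ℝ (⊤ : ℕ∞) F)
    (hsymm : ∀ x V W, F x V W = F x W V)
    (heven : ∀ x V W, F (-x) V W = F x V W)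
    (h : ∀ u v : EuclideanSpace ℝ (Fin n), ‖u‖ = 1 → ‖v‖ = 1 → ⟪u, v⟫ = 0 →
      ∀ i j : Fin n,
        ∫ t in (0:ℝ)..(2 * π),
          (Real.cos t • u + Real.sin t • v : EuclideanSpace ℝ (Fin n)) i *
            (Real.cos t • u + Real.sin t • v : EuclideanSpace ℝ (Fin n)) j *
            F (Real.cos t • u + Real.sin t • v)
              (-Real.sin t • u + Real.cos t • v) (-Real.sin t • u + Real.cos t • v)
          = 0) :
    ∀ x V : EuclideanSpace ℝ (Fin n), ‖x‖ = 1 → ⟪x, V⟫ = 0 → F x V V = 0 := by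
  intro x V hx hxV
  by_cases hV : V = 0
  · simp [hV]
  have hVn : ‖V‖ ≠ 0 := norm_ne_zero_iff.mpr hV
  obtain ⟨v, hv, hVv⟩ : ∃ v, ‖v‖ = 1 ∧ V = ‖V‖ • v :=
    ⟨‖V‖⁻¹ • V, by simp [norm_smul, hVn], by rw [smul_smul, mul_inv_cancel₀ hVn, one_smul]⟩
  have hxv : ⟪x, v⟫ = 0 := by
    rw [hVv, inner_smul_right] at hxV
    exact (mul_eq_zero.mp hxV).resolve_left hVn
  suffices hmain : F x v v = 0 by
    rw [hVv]; simp [hmain]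
  obtain ⟨z, hz⟩ := exists_third hn x v hx hv hxv
  set b : Fin 3 → EuclideanSpace ℝ (Fin n) := ![x, v, z] with hb
  have hLc : Continuous (L3 b) := LinearMap.continuous_of_finiteDimensional _
  let M : (Fin 3 → ℝ) → Matrix (Fin 3) (Fin 3) ℝ :=
    fun y => Matrix.of fun k l => F (L3 b y) (b k) (b l)
  have hFc : Continuous F := hF.continuous
  have hq : ∀ y u w, q M y u w = F (L3 b y) (L3 b u) (L3 b w) := by
    intro y u w
    rw [L3_apply b u, L3_apply b w]
    simp only [q, M, dotProduct, Matrix.mulVec, map_sum, map_smul, _root_.sum_apply,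
      _root_.smul_apply, smul_eq_mul, Matrix.of_apply]
    simp only [Fin.sum_univ_three]
    ring
  have key := core M
    (continuous_matrix fun i j => by simp only [M, Matrix.of_apply]; fun_prop)
    (fun y => by ext i j; simp only [M, Matrix.transpose_apply, Matrix.of_apply]; exact hsymm _ _ _)
    (fun y => by ext i j; simp only [M, map_neg, Matrix.of_apply]; exact heven _ _ _)
    (by
      intro u w β c hu hw huw
      have hu' : ‖L3 b u‖ = 1 := by
        rw [norm_eq_sqrt_real_inner, L3_inner hz, hu, Real.sqrt_one]
      have hw' : ‖L3 b w‖ = 1 := by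
        rw [norm_eq_sqrt_real_inner, L3_inner hz, hw, Real.sqrt_one]
      have h0 := h (L3 b u) (L3 b w) hu' hw' (by rw [L3_inner hz, huw])
      have e : ∀ t : ℝ, ((cos t • u + sin t • w) ⬝ᵥ β) * ((cos t • u + sin t • w) ⬝ᵥ c) *
          q M (cos t • u + sin t • w) ((-sin t) • u + cos t • w) ((-sin t) • u + cos t • w)
          = ∑ i, ∑ j, (L3 b β i * L3 b c j) *
            ((Real.cos t • L3 b u + Real.sin t • L3 b w : EuclideanSpace ℝ (Fin n)) i *
            (Real.cos t • L3 b u + Real.sin t • L3 b w : EuclideanSpace ℝ (Fin n)) j *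
            F (Real.cos t • L3 b u + Real.sin t • L3 b w)
              (-Real.sin t • L3 b u + Real.cos t • L3 b w)
              (-Real.sin t • L3 b u + Real.cos t • L3 b w)) := by
        intro t
        rw [hq, ← L3_inner hz, ← L3_inner hz]
        simp only [map_add, map_smul]
        rw [PiLp.inner_apply, PiLp.inner_apply, Finset.sum_mul_sum, Finset.sum_mul]
        refine Finset.sum_congr rfl fun i _ => ?_
        rw [Finset.sum_mul]
        refine Finset.sum_congr rfl fun j _ => ?_
        simp only [RCLike.inner_apply, conj_trivial]
        ring
      simp only [e]
      rw [intervalIntegral.integral_finsetSum]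
      · refine Finset.sum_eq_zero fun i _ => ?_
        rw [intervalIntegral.integral_finsetSum]
        · refine Finset.sum_eq_zero fun j _ => ?_
          rw [intervalIntegral.integral_const_mul, h0, mul_zero]
        · intro j _
          exact Continuous.intervalIntegrable (by fun_prop) _ _
      · intro i _
        exact Continuous.intervalIntegrable (by fun_prop) _ _) 1
  rw [hq] at key
  have r0 : L3 b (rw3 1 0) = x := by
    simp [L3_apply, rw3, Fin.sum_univ_three, hb]
  have r1 : L3 b (rw3 1 1) = v := by
    simp [L3_apply, rw3, Fin.sum_univ_three, hb]
  rwa [r0, r1] at key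
end

section
/- Let n ∈ ℕ with n ≥ 3, let m ∈ ℕ with m ≥ 3, and let F be a smooth symmetric 2-cotensor field on ℝ^n. Suppose that for every unit-speed great circle γ on the unit sphere S^{n−1} ⊂ ℝ^n one has ∫₀^π F(γ(t))(γ'(t), γ'(t))·(sin t)^m dt = 0. Then F(x)(V, V) = 0 for every x ∈ ℝ^n with ‖x‖ = 1 and every V ∈ ℝ^n with ⟨x, V⟩ = 0. -/
open Real intervalIntegral
open scoped RealInnerProductSpace


/-- Differentiation of a vanishing parametric integral. -/
lemma param_deriv_zero (Φ : ℝ → ℝ → ℝ) (D : ℝ → ℝ)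
    (hΦ : ContDiff ℝ 1 (fun p : ℝ × ℝ => Φ p.1 p.2))
    (hD : ∀ t, HasDerivAt (fun x => Φ x t) (D t) 0)
    (h0 : ∀ x, ∫ t in (0:ℝ)..π, Φ x t = 0) : ∫ t in (0:ℝ)..π, D t = 0 := by
  set Ψ : ℝ × ℝ → ℝ := fun p => Φ p.1 p.2 with hΨ
  let Φ' : ℝ → ℝ → ℝ := fun x t => fderiv ℝ Ψ (x, t) (1, 0)
  have hc : Continuous (fun p : ℝ × ℝ => Φ' p.1 p.2) := by
    have := hΦ.continuous_fderiv (by norm_num)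
    exact this.clm_apply continuous_const
  have hd : ∀ x t, HasDerivAt (fun x => Φ x t) (Φ' x t) x := by
    intro x t
    have h1 : HasFDerivAt Ψ (fderiv ℝ Ψ (x, t)) (x, t) :=
      (hΦ.differentiable (by norm_num) (x, t)).hasFDerivAt
    have h2 : HasDerivAt (fun x : ℝ => (x, t)) ((1 : ℝ), (0 : ℝ)) x :=
      (hasDerivAt_id x).prodMk (hasDerivAt_const x t)
    exact h1.comp_hasDerivAt x h2
  have hDe : D = Φ' 0 := by
    funext t
    exact (hD t).unique (hd 0 t)
  obtain ⟨C, hC⟩ := (((isCompact_Icc (a := (-1:ℝ)) (b := 1)).prod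
    (isCompact_Icc (a := (0:ℝ)) (b := π))).bddAbove_image hc.norm.continuousOn)
  have hcs : ∀ x, Continuous (Φ x) := fun x => by
    have := hΦ.continuous.comp (Continuous.prodMk_right x)
    exact this
  have hcs' : ∀ x, Continuous (Φ' x) := fun x => by
    have := hc.comp (Continuous.prodMk_right x)
    exact this
  have key := intervalIntegral.hasDerivAt_integral_of_dominated_loc_of_deriv_le
    (μ := MeasureTheory.volume) (a := 0) (b := π)
    (F := Φ) (F' := Φ') (x₀ := 0) (s := Set.Icc (-1) 1) (bound := fun _ => C)
    (Icc_mem_nhds (by norm_num) (by norm_num))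
    (Filter.Eventually.of_forall fun x => (hcs x).aestronglyMeasurable)
    ((hcs 0).intervalIntegrable _ _) ((hcs' 0).aestronglyMeasurable)
    (Filter.Eventually.of_forall fun t ht x hx => by
      rw [Set.uIoc_of_le pi_pos.le] at ht
      exact hC ⟨(x, t), ⟨hx, ⟨ht.1.le, ht.2⟩⟩, rfl⟩)
    (by simp)
    (Filter.Eventually.of_forall fun t _ x _ => hd x t)
  have h3 := key.2
  simp only [h0] at h3
  rw [hDe]
  exact h3.unique (hasDerivAt_const 0 0)

lemma shift_ibp (g W W' : ℝ → ℝ) (hg : ContDiff ℝ 1 g) (hW : ContDiff ℝ 1 W)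
    (hWd : ∀ t, HasDerivAt W (W' t) t)
    (h0 : ∀ ε, ∫ t in (0:ℝ)..π, g (t + ε) * W t = 0) (ε : ℝ) :
    ∫ t in (0:ℝ)..π, g (t + ε) * W' t = g (π + ε) * W π - g ε * W 0 := by
  have hgd : ∀ t, HasDerivAt g (deriv g t) t := fun t =>
    (hg.differentiable (by norm_num) t).hasDerivAt
  have hW'e : W' = deriv W := by
    funext t; exact ((hWd t).deriv).symm
  have hcW' : Continuous W' := by
    rw [hW'e]; exact hW.continuous_deriv (by norm_num)
  have hcg' : Continuous (deriv g) := hg.continuous_deriv (by norm_num)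
  have hcg := hg.continuous
  have hcW := hW.continuous
  have h1 : ∫ t in (0:ℝ)..π, deriv g (t + ε) * W t = 0 := by
    apply param_deriv_zero (fun x t => g (t + ε + x) * W t)
    · fun_prop
    · intro t
      have h : HasDerivAt (fun x => g (t + ε + x)) (deriv g (t + ε)) 0 := by
        have := (hgd (t + ε + 0)).comp_const_add (t + ε) 0
        simpa using this
      exact h.mul_const _
    · intro x
      simpa [add_assoc] using h0 (ε + x)
  have h2 : ∫ t in (0:ℝ)..π, (deriv g (t + ε) * W t + g (t + ε) * W' t)
      = g (π + ε) * W π - g (0 + ε) * W 0 := by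
    apply intervalIntegral.integral_eq_sub_of_hasDerivAt (f := fun t => g (t + ε) * W t)
    · intro t _
      exact ((hgd (t + ε)).comp_add_const t ε).mul (hWd t)
    · apply Continuous.intervalIntegrable; fun_prop
  rw [intervalIntegral.integral_add (by apply Continuous.intervalIntegrable; fun_prop)
    (by apply Continuous.intervalIntegrable; fun_prop), h1] at h2
  simpa using h2

lemma hasDerivAt_cs (a b : ℕ) (t : ℝ) :
    HasDerivAt (fun t => cos t ^ a * sin t ^ b)
      (-(a : ℝ) * (cos t ^ (a - 1) * sin t ^ (b + 1)) + b * (cos t ^ (a + 1) * sin t ^ (b - 1))) t := by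
  have := ((hasDerivAt_cos t).pow a).mul ((hasDerivAt_sin t).pow b)
  refine this.congr_deriv ?_
  simp only [Pi.pow_apply]
  ring

lemma moments_zero (m : ℕ) (g : ℝ → ℝ) (hg : ContDiff ℝ 1 g)
    (h0 : ∀ ε, ∫ t in (0:ℝ)..π, g (t + ε) * sin t ^ m = 0) :
    ∀ a b : ℕ, a + b = m → ∀ ε, ∫ t in (0:ℝ)..π, g (t + ε) * (cos t ^ a * sin t ^ b) = 0 := by
  have hcg := hg.continuous
  intro a
  induction a using Nat.strong_induction_on with
  | _ a ih =>
    intro b hab ε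
    rcases a with _ | a
    · have : b = m := by omega
      subst this
      simpa using h0 ε
    · have h1 := shift_ibp g (fun t => cos t ^ a * sin t ^ (b + 1)) _ hg
        (by fun_prop) (hasDerivAt_cs a (b + 1)) (ih a (by omega) (b + 1) (by omega)) ε
      have h2 : (a : ℝ) * ∫ t in (0:ℝ)..π, g (t + ε) * (cos t ^ (a - 1) * sin t ^ (b + 2)) = 0 := by
        rcases a with _ | a
        · simp
        · rw [Nat.add_sub_cancel, ih a (by omega) (b + 2) (by omega) ε, mul_zero]
      have h3 : ∫ t in (0:ℝ)..π, g (t + ε) * (-(a : ℝ) * (cos t ^ (a - 1) * sin t ^ (b + 1 + 1))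
          + ((b + 1 : ℕ) : ℝ) * (cos t ^ (a + 1) * sin t ^ (b + 1 - 1)))
          = - ((a : ℝ) * ∫ t in (0:ℝ)..π, g (t + ε) * (cos t ^ (a - 1) * sin t ^ (b + 2)))
          + ((b + 1 : ℕ) : ℝ) * ∫ t in (0:ℝ)..π, g (t + ε) * (cos t ^ (a + 1) * sin t ^ b) := by
        rw [← intervalIntegral.integral_const_mul, ← intervalIntegral.integral_const_mul,
          ← intervalIntegral.integral_neg, ← intervalIntegral.integral_add
          (by apply Continuous.intervalIntegrable; fun_prop)
          (by apply Continuous.intervalIntegrable; fun_prop)]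
        congr 1
        funext t
        simp only [Nat.add_sub_cancel]
        ring
      rw [h3, h2] at h1
      simp only [sin_pi, sin_zero] at h1
      have hb : ((b + 1 : ℕ) : ℝ) ≠ 0 := by positivity
      have h4 : ((b + 1 : ℕ) : ℝ) * ∫ t in (0:ℝ)..π, g (t + ε) * (cos t ^ (a + 1) * sin t ^ b) = 0 := by
        simpa using h1
      exact (mul_eq_zero.mp h4).resolve_left hb

lemma parity_of_moments (m : ℕ) (g : ℝ → ℝ) (hg : ContDiff ℝ 1 g)
    (h0 : ∀ ε, ∫ t in (0:ℝ)..π, g (t + ε) * sin t ^ m = 0) :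
    g π * (-1) ^ m = g 0 := by
  have hm := moments_zero m g hg h0
  have h1 := shift_ibp g (fun t => cos t ^ m * sin t ^ 0) _ hg
        (by fun_prop) (hasDerivAt_cs m 0) (hm m 0 (by omega)) 0
  have h2 : ∫ t in (0:ℝ)..π, g (t + 0) * (-(m : ℝ) * (cos t ^ (m - 1) * sin t ^ (0 + 1))
      + ((0 : ℕ) : ℝ) * (cos t ^ (m + 1) * sin t ^ (0 - 1)))
      = -(m : ℝ) * ∫ t in (0:ℝ)..π, g (t + 0) * (cos t ^ (m - 1) * sin t ^ (0 + 1)) := by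
    rw [← intervalIntegral.integral_const_mul]
    congr 1
    funext t
    simp
    ring
  rw [h2] at h1
  rcases m with _ | m
  · simp at h1 ⊢; linarith
  · rw [Nat.add_sub_cancel, hm m 1 (by omega)] at h1
    simp at h1
    linarith

/-- Double-integral identity (the hat-box theorem on a hemisphere). -/
lemma moment_identity (k : ℕ) :
    (∫ α in (0:ℝ)..π, sin α ^ (k + 1)) * (∫ t in (0:ℝ)..π, cos t ^ k)
      = π * ∫ z in (-1:ℝ)..1, z ^ k := by
  have key : ∀ k : ℕ, (∫ α in (0:ℝ)..π, sin α ^ (k + 1)) * (∫ t in (0:ℝ)..π, cos t ^ k)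
      = π * ((1 + (-1) ^ k) / (k + 1)) := by
    intro k
    induction k using Nat.twoStepInduction with
    | zero => simp; ring
    | one => simp
    | more k ih _ =>
      rw [show k + 2 + 1 = (k + 1) + 2 by ring, integral_sin_pow, integral_cos_pow]
      simp only [sin_pi, sin_zero]
      have h1 : (k : ℝ) + 1 ≠ 0 := by positivity
      have h2 : (k : ℝ) + 2 ≠ 0 := by positivity
      have h3 : (k : ℝ) + 3 ≠ 0 := by positivity
      have h4 : (k : ℝ) + 1 + 2 ≠ 0 := by positivity
      have h5 : (k : ℝ) + 2 + 1 ≠ 0 := by positivity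
      push_cast
      have e : ((0 ^ (k + 1 + 1) * cos 0 - 0 ^ (k + 1 + 1) * cos π) / ((k:ℝ) + 1 + 2) +
          ((k:ℝ) + 1 + 1) / (k + 1 + 2) * ∫ x in (0:ℝ)..π, sin x ^ (k + 1)) *
          ((cos π ^ (k + 1) * 0 - cos 0 ^ (k + 1) * 0) / ((k:ℝ) + 2) +
          ((k:ℝ) + 1) / (k + 2) * ∫ x in (0:ℝ)..π, cos x ^ k)
          = ((k:ℝ) + 1 + 1) / (k + 1 + 2) * (((k:ℝ) + 1) / (k + 2)) *
            ((∫ x in (0:ℝ)..π, sin x ^ (k + 1)) * ∫ x in (0:ℝ)..π, cos x ^ k) := by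
        simp; ring
      rw [e, ih]
      field_simp
      ring
  rw [key, integral_pow]
  simp [pow_succ]

lemma continuous_inner_int (ψ : ℝ → ℝ) (hψ : Continuous ψ) :
    Continuous (fun α => ∫ t in (0:ℝ)..π, ψ (sin α * cos t)) := by
  apply intervalIntegral.continuous_parametric_intervalIntegral_of_continuous'
  fun_prop

lemma hatbox_poly (p : Polynomial ℝ) :
    ∫ α in (0:ℝ)..π, sin α * ∫ t in (0:ℝ)..π, p.eval (sin α * cos t)
      = π * ∫ z in (-1:ℝ)..1, p.eval z := by
  induction p using Polynomial.induction_on' with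
  | add p q hp hq =>
    have hpc := p.continuous
    have hqc := q.continuous
    have h1 := continuous_inner_int _ hpc
    have h2 := continuous_inner_int _ hqc
    simp only [Polynomial.eval_add]
    rw [intervalIntegral.integral_add (hpc.intervalIntegrable _ _) (hqc.intervalIntegrable _ _),
      mul_add, ← hp, ← hq, ← intervalIntegral.integral_add
        (by apply Continuous.intervalIntegrable; fun_prop)
        (by apply Continuous.intervalIntegrable; fun_prop)]
    congr 1
    funext α
    rw [intervalIntegral.integral_add
        (by apply Continuous.intervalIntegrable; fun_prop)
        (by apply Continuous.intervalIntegrable; fun_prop), mul_add]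
  | monomial k c =>
    simp only [Polynomial.eval_monomial, mul_pow, intervalIntegral.integral_const_mul]
    have := moment_identity k
    have e : ∀ α : ℝ, sin α * (c * (sin α ^ k * ∫ t in (0:ℝ)..π, cos t ^ k))
        = (c * ∫ t in (0:ℝ)..π, cos t ^ k) * sin α ^ (k + 1) := fun α => by ring
    simp only [e, intervalIntegral.integral_const_mul]
    linear_combination c * this

lemma hatbox (ψ : ℝ → ℝ) (hψ : Continuous ψ) :
    ∫ α in (0:ℝ)..π, sin α * ∫ t in (0:ℝ)..π, ψ (sin α * cos t)
      = π * ∫ z in (-1:ℝ)..1, ψ z := by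
  have hψi := continuous_inner_int _ hψ
  rw [← sub_eq_zero, ← abs_nonpos_iff]
  have hpi := pi_pos
  apply le_of_forall_pos_le_add
  intro ε hε
  have hδ : 0 < ε / (π * π + 2 * π) := by positivity
  obtain ⟨p, hp⟩ := exists_polynomial_near_of_continuousOn (-1) 1 ψ hψ.continuousOn _ hδ
  set δ := ε / (π * π + 2 * π) with hδd
  have hpc := p.continuous
  have hpi' := continuous_inner_int _ hpc
  have h1 : |(∫ z in (-1:ℝ)..1, ψ z) - ∫ z in (-1:ℝ)..1, p.eval z| ≤ δ * 2 := by
    rw [← intervalIntegral.integral_sub (hψ.intervalIntegrable _ _) (hpc.intervalIntegrable _ _)]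
    have := intervalIntegral.norm_integral_le_of_norm_le_const (a := -1) (b := 1) (C := δ)
      (f := fun z => ψ z - p.eval z) (by
        intro z hz
        rw [Set.uIoc_of_le (by norm_num)] at hz
        rw [norm_sub_rev]
        exact (hp z ⟨hz.1.le, hz.2⟩).le)
    norm_num at this ⊢
    exact this
  have h2 : |(∫ α in (0:ℝ)..π, sin α * ∫ t in (0:ℝ)..π, ψ (sin α * cos t)) -
      ∫ α in (0:ℝ)..π, sin α * ∫ t in (0:ℝ)..π, p.eval (sin α * cos t)| ≤ δ * π * π := by
    rw [← intervalIntegral.integral_sub (by apply Continuous.intervalIntegrable; fun_prop)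
      (by apply Continuous.intervalIntegrable; fun_prop)]
    have := intervalIntegral.norm_integral_le_of_norm_le_const (a := 0) (b := π) (C := δ * π)
      (f := fun α => sin α * (∫ t in (0:ℝ)..π, ψ (sin α * cos t)) -
        sin α * ∫ t in (0:ℝ)..π, p.eval (sin α * cos t)) (by
        intro α _
        rw [← mul_sub, ← intervalIntegral.integral_sub
          (by apply Continuous.intervalIntegrable; fun_prop)
          (by apply Continuous.intervalIntegrable; fun_prop), norm_mul]
        have h3 := intervalIntegral.norm_integral_le_of_norm_le_const (a := 0) (b := π) (C := δ)
          (f := fun t => ψ (sin α * cos t) - p.eval (sin α * cos t)) (by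
            intro t _
            rw [norm_sub_rev]
            refine (hp _ ?_).le
            rw [Set.mem_Icc, ← abs_le, abs_mul]
            exact mul_le_one₀ (abs_sin_le_one _) (abs_nonneg _) (abs_cos_le_one _))
        rw [sub_zero, abs_of_pos hpi] at h3
        calc ‖sin α‖ * _ ≤ 1 * (δ * π) :=
              mul_le_mul (abs_sin_le_one _) h3 (norm_nonneg _) zero_le_one
          _ = δ * π := one_mul _)
    rw [sub_zero, abs_of_pos hpi] at this
    exact this
  rw [hatbox_poly p] at h2
  have h4 : δ * (π * π + 2 * π) = ε := by rw [hδd]; field_simp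
  rw [abs_le] at h1 h2
  rw [zero_add, abs_le]
  constructor
  · nlinarith [h1.1, h1.2, h2.1, h2.2]
  · nlinarith [h1.1, h1.2, h2.1, h2.2]

/-- Abel-type inversion at the endpoint. -/
lemma abel_zero (φ : ℝ → ℝ) (hφ : Continuous φ)
    (h : ∀ r ∈ Set.Icc (0:ℝ) 1, ∫ t in (0:ℝ)..π, φ (r * cos t) = 0) : φ 1 + φ (-1) = 0 := by
  have h1 : ∀ R ∈ Set.Icc (0:ℝ) 1, ∫ z in (-R)..R, φ z = 0 := by
    intro R hR
    have h2 := hatbox (fun z => φ (R * z)) (by fun_prop)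
    have h3 : ∫ α in (0:ℝ)..π, sin α * ∫ t in (0:ℝ)..π, φ (R * (sin α * cos t)) = 0 := by
      rw [intervalIntegral.integral_congr (g := fun _ => (0:ℝ))]
      · simp
      · intro α hα
        rw [Set.uIcc_of_le pi_pos.le] at hα
        have := h (R * sin α) ⟨mul_nonneg hR.1 (sin_nonneg_of_mem_Icc hα),
          mul_le_one₀ hR.2 (sin_nonneg_of_mem_Icc hα) (sin_le_one α)⟩
        simp only [← mul_assoc]
        simp [this]
    rw [h3] at h2
    have h4 : ∫ z in (-1:ℝ)..1, φ (R * z) = 0 := by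
      rcases mul_eq_zero.mp h2.symm with h | h
      · exact absurd h pi_ne_zero
      · exact h
    have h5 := intervalIntegral.smul_integral_comp_mul_left (a := -1) (b := 1) φ R
    rw [h4] at h5
    simpa using h5.symm
  set G : ℝ → ℝ := fun R => ∫ z in (-R)..R, φ z with hG
  have hGe : G = fun R => (∫ z in (0:ℝ)..R, φ z) - ∫ z in (0:ℝ)..(-R), φ z := by
    funext R
    rw [intervalIntegral.integral_interval_sub_left (hφ.intervalIntegrable _ _)
      (hφ.intervalIntegrable _ _)]
  have hd : HasDerivAt G (φ 1 + φ (-1)) 1 := by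
    rw [hGe]
    have a1 : HasDerivAt (fun R => ∫ z in (0:ℝ)..R, φ z) (φ 1) 1 :=
      hφ.integral_hasStrictDerivAt 0 1 |>.hasDerivAt
    have a2 : HasDerivAt (fun R => ∫ z in (0:ℝ)..R, φ z) (φ (-1)) (-1) :=
      hφ.integral_hasStrictDerivAt 0 (-1) |>.hasDerivAt
    have a3 := HasDerivAt.comp (1:ℝ) a2 (hasDerivAt_neg (1:ℝ))
    have := a1.sub a3
    refine this.congr_deriv ?_
    ring
  have hw : HasDerivWithinAt G (φ 1 + φ (-1)) (Set.Icc 0 1) 1 := hd.hasDerivWithinAt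
  have hw0 : HasDerivWithinAt G 0 (Set.Icc 0 1) 1 :=
    (hasDerivWithinAt_const (1:ℝ) (Set.Icc (0:ℝ) 1) (0:ℝ)).congr (fun R hR => h1 R hR)
      (h1 1 (by simp))
  exact (uniqueDiffOn_Icc (zero_lt_one' ℝ) 1 (by simp)).eq_deriv _ hw hw0

/-- Rotation invariance of full-period averages. -/
lemma rot_average {E : Type*} [NormedAddCommGroup E] [InnerProductSpace ℝ E]
    (h : E → ℝ) (c a b : E) (p q ρ : ℝ) (hρ : 0 ≤ ρ) (hpq : p ^ 2 + q ^ 2 = ρ ^ 2) :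
    ∫ θ in (0:ℝ)..(2 * π), h (c + p • (cos θ • a + sin θ • b) + q • (-sin θ • a + cos θ • b))
      = ∫ θ in (0:ℝ)..(2 * π), h (c + ρ • (cos θ • a + sin θ • b)) := by
  obtain ⟨δ, h1, h2⟩ : ∃ δ : ℝ, p = ρ * cos δ ∧ q = ρ * sin δ := by
    refine ⟨Complex.arg ⟨p, q⟩, ?_⟩
    have hn : ‖(⟨p, q⟩ : ℂ)‖ = ρ := by
      rw [Complex.norm_def, Complex.normSq_mk, ← sq, ← sq, hpq, Real.sqrt_sq hρ]
    rw [← hn]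
    exact ⟨(Complex.norm_mul_cos_arg ⟨p, q⟩).symm, (Complex.norm_mul_sin_arg ⟨p, q⟩).symm⟩
  have e : ∀ θ : ℝ, h (c + p • (cos θ • a + sin θ • b) + q • (-sin θ • a + cos θ • b))
      = (fun θ => h (c + ρ • (cos θ • a + sin θ • b))) (θ + δ) := by
    intro θ
    simp only [cos_add, sin_add]
    congr 1
    rw [h1, h2]
    module
  simp only [e]
  rw [intervalIntegral.integral_comp_add_right (fun θ => h (c + ρ • (cos θ • a + sin θ • b))) δ]
  have hper : Function.Periodic (fun θ => h (c + ρ • (cos θ • a + sin θ • b))) (2 * π) := by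
    intro θ; simp
  have := hper.intervalIntegral_add_eq (0 + δ) 0
  rw [show (2 * π + δ) = 0 + δ + 2 * π by ring, this]
  simp

/-- Funk injectivity (pointwise version). -/
lemma funk {E : Type*} [NormedAddCommGroup E] [InnerProductSpace ℝ E]
    (h : E → ℝ) (hh : Continuous h)
    (h0 : ∀ u v : E, ‖u‖ = 1 → ‖v‖ = 1 → ⟪u, v⟫ = 0 →
      ∫ t in (0:ℝ)..π, h (cos t • u + sin t • v) = 0)
    (x a b : E) (hx : ‖x‖ = 1) (ha : ‖a‖ = 1) (hb : ‖b‖ = 1) (hxa : ⟪x, a⟫ = 0)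
    (hxb : ⟪x, b⟫ = 0) (hab : ⟪a, b⟫ = 0) : h x + h (-x) = 0 := by
  have hax : ⟪a, x⟫ = 0 := by rw [real_inner_comm]; exact hxa
  have hbx : ⟪b, x⟫ = 0 := by rw [real_inner_comm]; exact hxb
  have hba : ⟪b, a⟫ = 0 := by rw [real_inner_comm]; exact hab
  have hxx : ⟪x, x⟫ = 1 := by rw [real_inner_self_eq_norm_sq, hx, one_pow]
  have haa : ⟪a, a⟫ = 1 := by rw [real_inner_self_eq_norm_sq, ha, one_pow]
  have hbb : ⟪b, b⟫ = 1 := by rw [real_inner_self_eq_norm_sq, hb, one_pow]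
  let φ : ℝ → ℝ := fun z => ∫ θ in (0:ℝ)..(2 * π), h (z • x + √(1 - z ^ 2) • (cos θ • a + sin θ • b))
  have hφ : Continuous φ := by
    apply intervalIntegral.continuous_parametric_intervalIntegral_of_continuous'
    fun_prop
  have key : φ 1 + φ (-1) = 0 := by
    apply abel_zero φ hφ
    intro r hr
    set k := √(1 - r ^ 2) with hk
    have hk2 : k ^ 2 = 1 - r ^ 2 := Real.sq_sqrt (by nlinarith [hr.1, hr.2])
    have e : ∀ t : ℝ, φ (r * cos t) = ∫ θ in (0:ℝ)..(2 * π),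
        h (cos t • (r • x + k • (cos θ • a + sin θ • b)) + sin t • (-sin θ • a + cos θ • b)) := by
      intro t
      have := rot_average h ((r * cos t) • x) a b (k * cos t) (sin t) (√(1 - (r * cos t) ^ 2))
        (Real.sqrt_nonneg _) (by
          rw [Real.sq_sqrt]
          · rw [mul_pow, hk2, sin_sq]; ring
          · rw [mul_pow]
            nlinarith [hr.1, hr.2, cos_sq_le_one t, sq_nonneg (cos t), sq_nonneg r,
              mul_le_one₀ (show r ^ 2 ≤ 1 by nlinarith [hr.1, hr.2]) (sq_nonneg (cos t)) (cos_sq_le_one t)])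
      refine this.symm.trans ?_
      congr 1
      funext θ
      congr 1
      module
    simp only [e]
    rw [MeasureTheory.intervalIntegral_intervalIntegral_swap]
    · have z : ∀ θ : ℝ, ∫ t in (0:ℝ)..π, h (cos t • (r • x + k • (cos θ • a + sin θ • b))
          + sin t • (-sin θ • a + cos θ • b)) = 0 := by
        intro θ
        have n1 : ‖r • x + k • (cos θ • a + sin θ • b)‖ ^ 2 = 1 := by
          rw [← real_inner_self_eq_norm_sq]
          simp only [inner_add_left, inner_add_right, real_inner_smul_left, real_inner_smul_right,
            hxa, hxb, hab, hax, hbx, hba, hxx, haa, hbb]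
          linear_combination hk2 + k ^ 2 * sin_sq_add_cos_sq θ
        have n2 : ‖-sin θ • a + cos θ • b‖ ^ 2 = 1 := by
          rw [← real_inner_self_eq_norm_sq]
          simp only [inner_add_left, inner_add_right, real_inner_smul_left, real_inner_smul_right,
            hxa, hxb, hab, hax, hbx, hba, hxx, haa, hbb]
          linear_combination sin_sq_add_cos_sq θ
        apply h0
        · exact (pow_eq_one_iff_of_nonneg (norm_nonneg _) two_ne_zero).mp n1
        · exact (pow_eq_one_iff_of_nonneg (norm_nonneg _) two_ne_zero).mp n2
        · simp only [inner_add_left, inner_add_right, real_inner_smul_left, real_inner_smul_right,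
            hxa, hxb, hab, hax, hbx, hba, hxx, haa, hbb]
          ring
      simp only [z, intervalIntegral.integral_zero]
    · apply MeasureTheory.IntegrableOn.mono_set (t := Set.uIcc 0 π ×ˢ Set.uIcc 0 (2 * π))
      · apply ContinuousOn.integrableOn_compact (isCompact_uIcc.prod isCompact_uIcc)
        apply Continuous.continuousOn
        unfold Function.uncurry
        fun_prop
      · exact Set.prod_mono Set.uIoc_subset_uIcc Set.uIoc_subset_uIcc
  have hp := pi_pos
  have e1 : φ 1 = (2 * π) * h x := by simp [φ]
  have e2 : φ (-1) = (2 * π) * h (-x) := by simp [φ]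
  rw [e1, e2, ← mul_add] at key
  exact (mul_eq_zero.mp key).resolve_left (by positivity)

lemma lin_moment (K : ℕ) (G : ℝ → ℝ) (hG : Continuous G)
    (h : ∀ a b : ℕ, a + b = K → ∫ t in (0:ℝ)..π, G t * (cos t ^ a * sin t ^ b) = 0) (p q : ℝ) :
    ∀ j a b : ℕ, a + b + j = K →
      ∫ t in (0:ℝ)..π, G t * ((p * cos t + q * sin t) ^ j * (cos t ^ a * sin t ^ b)) = 0 := by
  intro j
  induction j with
  | zero => intro a b hab; simpa using h a b hab
  | succ j ih =>
    intro a b hab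
    have e : ∀ t : ℝ, G t * ((p * cos t + q * sin t) ^ (j + 1) * (cos t ^ a * sin t ^ b))
      = p * (G t * ((p * cos t + q * sin t) ^ j * (cos t ^ (a + 1) * sin t ^ b)))
      + q * (G t * ((p * cos t + q * sin t) ^ j * (cos t ^ a * sin t ^ (b + 1)))) := by
      intro t; ring
    simp only [e]
    rw [intervalIntegral.integral_add (by apply Continuous.intervalIntegrable; fun_prop)
          (by apply Continuous.intervalIntegrable; fun_prop),
      intervalIntegral.integral_const_mul, intervalIntegral.integral_const_mul,
      ih (a + 1) b (by omega), ih a (b + 1) (by omega)]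
    simp

lemma int_sub_zero (f g : ℝ → ℝ) (hf : Continuous f) (hg : Continuous g)
    (h1 : ∫ t in (0:ℝ)..π, f t = 0) (h2 : ∫ t in (0:ℝ)..π, g t = 0) :
    ∫ t in (0:ℝ)..π, (f t - g t) = 0 := by
  rw [intervalIntegral.integral_sub (hf.intervalIntegrable _ _) (hg.intervalIntegrable _ _), h1, h2,
    sub_zero]

lemma int_add_zero (f g : ℝ → ℝ) (hf : Continuous f) (hg : Continuous g)
    (h1 : ∫ t in (0:ℝ)..π, f t = 0) (h2 : ∫ t in (0:ℝ)..π, g t = 0) :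
    ∫ t in (0:ℝ)..π, (f t + g t) = 0 := by
  rw [intervalIntegral.integral_add (hf.intervalIntegrable _ _) (hg.intervalIntegrable _ _), h1, h2,
    add_zero]

section tensor
variable {E : Type*} [NormedAddCommGroup E] [InnerProductSpace ℝ E]

lemma rot_norm (u e : E) (hu : ‖u‖ = 1) (he : ‖e‖ = 1) (hue : ⟪u, e⟫ = 0) (p q : ℝ)
    (hpq : p ^ 2 + q ^ 2 = 1) : ‖p • u + q • e‖ = 1 := by
  have hxx : ⟪u, u⟫ = 1 := by rw [real_inner_self_eq_norm_sq, hu, one_pow]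
  have haa : ⟪e, e⟫ = 1 := by rw [real_inner_self_eq_norm_sq, he, one_pow]
  have heu : ⟪e, u⟫ = 0 := by rw [real_inner_comm]; exact hue
  have n1 : ‖p • u + q • e‖ ^ 2 = 1 := by
    rw [← real_inner_self_eq_norm_sq]
    simp only [inner_add_left, inner_add_right, real_inner_smul_left, real_inner_smul_right,
      hxx, haa, hue, heu]
    linear_combination hpq
  exact (pow_eq_one_iff_of_nonneg (norm_nonneg _) two_ne_zero).mp n1

lemma hasDerivAt_tensor (F : E → (E →L[ℝ] E →L[ℝ] ℝ)) (hF : ContDiff ℝ 1 F)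
    (x V W : ℝ → E) (x' V' W' : E) (hx : HasDerivAt x x' 0) (hV : HasDerivAt V V' 0)
    (hW : HasDerivAt W W' 0) :
    HasDerivAt (fun s => F (x s) (V s) (W s))
      (fderiv ℝ F (x 0) x' (V 0) (W 0) + F (x 0) V' (W 0) + F (x 0) (V 0) W') 0 := by
  have h1 : HasDerivAt (fun s => F (x s)) (fderiv ℝ F (x 0) x') 0 :=
    (hF.differentiable (by norm_num) (x 0)).hasFDerivAt.comp_hasDerivAt 0 hx
  have h2 := (h1.clm_apply hV).clm_apply hW
  refine h2.congr_deriv ?_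
  simp

variable (F : E → (E →L[ℝ] E →L[ℝ] ℝ)) (m : ℕ)

lemma all_moments (hF : ContDiff ℝ 1 F)
    (h : ∀ u v : E, ‖u‖ = 1 → ‖v‖ = 1 → ⟪u, v⟫ = 0 →
      ∫ t in (0:ℝ)..π,
        F (cos t • u + sin t • v) (-sin t • u + cos t • v) (-sin t • u + cos t • v)
          * sin t ^ m = 0) (u v : E) (hu : ‖u‖ = 1) (hv : ‖v‖ = 1) (huv : ⟪u, v⟫ = 0) :
    (∀ a b : ℕ, a + b = m → ∫ t in (0:ℝ)..π,
        F (cos t • u + sin t • v) (-sin t • u + cos t • v) (-sin t • u + cos t • v)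
          * (cos t ^ a * sin t ^ b) = 0) ∧ F (-u) v v * (-1) ^ m = F u v v := by
  have hvu : ⟪v, u⟫ = 0 := by rw [real_inner_comm]; exact huv
  have hxx : ⟪u, u⟫ = 1 := by rw [real_inner_self_eq_norm_sq, hu, one_pow]
  have haa : ⟪v, v⟫ = 1 := by rw [real_inner_self_eq_norm_sq, hv, one_pow]
  let g : ℝ → ℝ := fun t =>
    F (cos t • u + sin t • v) (-sin t • u + cos t • v) (-sin t • u + cos t • v)
  have hg : ContDiff ℝ 1 g := by
    have h1 : ContDiff ℝ 1 (fun t : ℝ => cos t • u + sin t • v) := by fun_prop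
    have h2 : ContDiff ℝ 1 (fun t : ℝ => -sin t • u + cos t • v) := by fun_prop
    exact ((hF.comp h1).clm_apply h2).clm_apply h2
  have h0 : ∀ ε, ∫ t in (0:ℝ)..π, g (t + ε) * sin t ^ m = 0 := by
    intro ε
    have := h (cos ε • u + sin ε • v) (-sin ε • u + cos ε • v)
      (rot_norm u v hu hv huv _ _ (cos_sq_add_sin_sq ε))
      (rot_norm u v hu hv huv _ _ (by rw [neg_sq]; exact sin_sq_add_cos_sq ε))
      (by
        simp only [inner_add_left, inner_add_right, real_inner_smul_left, real_inner_smul_right,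
          hxx, haa, huv, hvu]
        ring)
    rw [← this]
    congr 1
    funext t
    have e1 : cos (t + ε) • u + sin (t + ε) • v =
      cos t • (cos ε • u + sin ε • v) + sin t • (-sin ε • u + cos ε • v) := by
      rw [cos_add, sin_add]; module
    have e2 : -sin (t + ε) • u + cos (t + ε) • v =
      -sin t • (cos ε • u + sin ε • v) + cos t • (-sin ε • u + cos ε • v) := by
      rw [cos_add, sin_add]; module
    simp only [g]
    rw [e1, e2]
  refine ⟨fun a b hab => ?_, ?_⟩
  · simpa [g] using moments_zero m g hg h0 a b hab 0
  · simpa [g] using parity_of_moments m g hg h0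

lemma inner_rot (u v e : E) (huv : ⟪u, v⟫ = 0) (hev : ⟪e, v⟫ = 0) (p q : ℝ) :
    ⟪p • u + q • e, v⟫ = 0 := by
  simp only [inner_add_left, real_inner_smul_left, huv, hev]; ring

lemma inner_rot' (u v e : E) (huv : ⟪u, v⟫ = 0) (hue : ⟪u, e⟫ = 0) (p q : ℝ) :
    ⟪u, p • v + q • e⟫ = 0 := by
  simp only [inner_add_right, real_inner_smul_right, huv, hue]; ring

lemma hasDerivAt_rot (u e : E) : HasDerivAt (fun s : ℝ => cos s • u + sin s • e) e 0 := by
  have := ((hasDerivAt_cos 0).smul_const u).add ((hasDerivAt_sin 0).smul_const e)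
  refine this.congr_deriv ?_
  simp

lemma mixed_moments (hF : ContDiff ℝ 1 F) (hsymm : ∀ x V W, F x V W = F x W V)
    (hM : ∀ u v : E, ‖u‖ = 1 → ‖v‖ = 1 → ⟪u, v⟫ = 0 → ∀ a b : ℕ, a + b = m →
        ∫ t in (0:ℝ)..π,
          F (cos t • u + sin t • v) (-sin t • u + cos t • v) (-sin t • u + cos t • v)
            * (cos t ^ a * sin t ^ b) = 0)
    (u v e : E) (hu : ‖u‖ = 1) (hv : ‖v‖ = 1) (he : ‖e‖ = 1)
    (huv : ⟪u, v⟫ = 0) (hue : ⟪u, e⟫ = 0) (hve : ⟪v, e⟫ = 0) (a b : ℕ) (hab : a + b + 1 = m) :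
    ∫ t in (0:ℝ)..π, F (cos t • u + sin t • v) e (-sin t • u + cos t • v)
      * (cos t ^ a * sin t ^ b) = 0 := by
  have hev : ⟪e, v⟫ = 0 := by rw [real_inner_comm]; exact hve
  have hFc := hF.continuous
  have hFd := hF.continuous_fderiv (by norm_num)
  have Iu : ∫ t in (0:ℝ)..π, (fderiv ℝ F (cos t • u + sin t • v) (cos t • e)
        (-sin t • u + cos t • v) (-sin t • u + cos t • v)
      + F (cos t • u + sin t • v) (-sin t • e) (-sin t • u + cos t • v)
      + F (cos t • u + sin t • v) (-sin t • u + cos t • v) (-sin t • e))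
      * (cos t ^ a * sin t ^ (b + 1)) = 0 := by
    apply param_deriv_zero (fun s t => F (cos t • (cos s • u + sin s • e) + sin t • v)
      (-sin t • (cos s • u + sin s • e) + cos t • v)
      (-sin t • (cos s • u + sin s • e) + cos t • v) * (cos t ^ a * sin t ^ (b + 1)))
    · have h1 : ContDiff ℝ 1 (fun p : ℝ × ℝ => cos p.2 • (cos p.1 • u + sin p.1 • e) + sin p.2 • v) := by
        fun_prop
      have h2 : ContDiff ℝ 1 (fun p : ℝ × ℝ => -sin p.2 • (cos p.1 • u + sin p.1 • e) + cos p.2 • v) := by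
        fun_prop
      have h3 : ContDiff ℝ 1 (fun p : ℝ × ℝ => cos p.2 ^ a * sin p.2 ^ (b + 1)) := by fun_prop
      exact (((hF.comp h1).clm_apply h2).clm_apply h2).mul h3
    · intro t
      have d1 := ((hasDerivAt_rot u e).const_smul (cos t)).add_const (sin t • v)
      have d2 := ((hasDerivAt_rot u e).const_smul (-sin t)).add_const (cos t • v)
      have := (hasDerivAt_tensor F hF _ _ _ _ _ _ d1 d2 d2).mul_const (cos t ^ a * sin t ^ (b + 1))
      simpa using this
    · intro s
      exact hM _ v (rot_norm u e hu he hue _ _ (cos_sq_add_sin_sq s)) hv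
        (inner_rot u v e huv hev _ _) a (b + 1) (by omega)
  have Iv : ∫ t in (0:ℝ)..π, (fderiv ℝ F (cos t • u + sin t • v) (sin t • e)
        (-sin t • u + cos t • v) (-sin t • u + cos t • v)
      + F (cos t • u + sin t • v) (cos t • e) (-sin t • u + cos t • v)
      + F (cos t • u + sin t • v) (-sin t • u + cos t • v) (cos t • e))
      * (cos t ^ (a + 1) * sin t ^ b) = 0 := by
    apply param_deriv_zero (fun s t => F (cos t • u + sin t • (cos s • v + sin s • e))
      (-sin t • u + cos t • (cos s • v + sin s • e))
      (-sin t • u + cos t • (cos s • v + sin s • e)) * (cos t ^ (a + 1) * sin t ^ b))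
    · have h1 : ContDiff ℝ 1 (fun p : ℝ × ℝ => cos p.2 • u + sin p.2 • (cos p.1 • v + sin p.1 • e)) := by
        fun_prop
      have h2 : ContDiff ℝ 1 (fun p : ℝ × ℝ => -sin p.2 • u + cos p.2 • (cos p.1 • v + sin p.1 • e)) := by
        fun_prop
      have h3 : ContDiff ℝ 1 (fun p : ℝ × ℝ => cos p.2 ^ (a + 1) * sin p.2 ^ b) := by fun_prop
      exact (((hF.comp h1).clm_apply h2).clm_apply h2).mul h3
    · intro t
      have d1 := ((hasDerivAt_rot v e).const_smul (sin t)).const_add (cos t • u)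
      have d2 := ((hasDerivAt_rot v e).const_smul (cos t)).const_add (-sin t • u)
      have := (hasDerivAt_tensor F hF _ _ _ _ _ _ d1 d2 d2).mul_const (cos t ^ (a + 1) * sin t ^ b)
      simpa using this
    · intro s
      exact hM u _ hu (rot_norm v e hv he hve _ _ (cos_sq_add_sin_sq s))
        (inner_rot' u v e huv hue _ _) (a + 1) b (by omega)
  have hdiff := int_sub_zero _ _ (by fun_prop) (by fun_prop) Iv Iu
  have e2 : (2:ℝ) * ∫ t in (0:ℝ)..π, F (cos t • u + sin t • v) e (-sin t • u + cos t • v)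
      * (cos t ^ a * sin t ^ b) = 0 := by
    rw [← intervalIntegral.integral_const_mul, ← hdiff]
    congr 1
    funext t
    rw [hsymm _ (-sin t • u + cos t • v) (cos t • e), hsymm _ (-sin t • u + cos t • v) (-sin t • e)]
    generalize -sin t • u + cos t • v = γ'
    simp only [map_smul, smul_apply, smul_eq_mul]
    linear_combination (-2 * (F (cos t • u + sin t • v)) e γ' * (cos t ^ a * sin t ^ b)) * sin_sq_add_cos_sq t
  linarith

lemma normal_moments (hF : ContDiff ℝ 1 F) (hsymm : ∀ x V W, F x V W = F x W V)
    (hM : ∀ u v : E, ‖u‖ = 1 → ‖v‖ = 1 → ⟪u, v⟫ = 0 → ∀ a b : ℕ, a + b = m →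
        ∫ t in (0:ℝ)..π,
          F (cos t • u + sin t • v) (-sin t • u + cos t • v) (-sin t • u + cos t • v)
            * (cos t ^ a * sin t ^ b) = 0)
    (u v e : E) (hu : ‖u‖ = 1) (hv : ‖v‖ = 1) (he : ‖e‖ = 1)
    (huv : ⟪u, v⟫ = 0) (hue : ⟪u, e⟫ = 0) (hve : ⟪v, e⟫ = 0) (a b : ℕ) (hab : a + b + 2 = m) :
    ∫ t in (0:ℝ)..π, F (cos t • u + sin t • v) e e * (cos t ^ a * sin t ^ b) = 0 := by
  have hev : ⟪e, v⟫ = 0 := by rw [real_inner_comm]; exact hve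
  have heu : ⟪e, u⟫ = 0 := by rw [real_inner_comm]; exact hue
  have hvu : ⟪v, u⟫ = 0 := by rw [real_inner_comm]; exact huv
  have huu : ⟪u, u⟫ = 1 := by rw [real_inner_self_eq_norm_sq, hu, one_pow]
  have hvv : ⟪v, v⟫ = 1 := by rw [real_inner_self_eq_norm_sq, hv, one_pow]
  have hee : ⟪e, e⟫ = 1 := by rw [real_inner_self_eq_norm_sq, he, one_pow]
  have hFc := hF.continuous
  have hFd := hF.continuous_fderiv (by norm_num)
  have hneg : ∀ s : ℝ, cos s ^ 2 + (sin s) ^ 2 = 1 := cos_sq_add_sin_sq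
  have Iu : ∫ t in (0:ℝ)..π, (fderiv ℝ F (cos t • u + sin t • v) (cos t • e)
        e (-sin t • u + cos t • v)
      + F (cos t • u + sin t • v) (-u) (-sin t • u + cos t • v)
      + F (cos t • u + sin t • v) e (-sin t • e))
      * (cos t ^ a * sin t ^ (b + 1)) = 0 := by
    apply param_deriv_zero (fun s t => F (cos t • (cos s • u + sin s • e) + sin t • v)
      (cos s • e + sin s • (-u))
      (-sin t • (cos s • u + sin s • e) + cos t • v) * (cos t ^ a * sin t ^ (b + 1)))
    · have h1 : ContDiff ℝ 1 (fun p : ℝ × ℝ => cos p.2 • (cos p.1 • u + sin p.1 • e) + sin p.2 • v) := by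
        fun_prop
      have h2 : ContDiff ℝ 1 (fun p : ℝ × ℝ => -sin p.2 • (cos p.1 • u + sin p.1 • e) + cos p.2 • v) := by
        fun_prop
      have h4 : ContDiff ℝ 1 (fun p : ℝ × ℝ => cos p.1 • e + sin p.1 • (-u)) := by
        fun_prop
      have h3 : ContDiff ℝ 1 (fun p : ℝ × ℝ => cos p.2 ^ a * sin p.2 ^ (b + 1)) := by fun_prop
      exact (((hF.comp h1).clm_apply h4).clm_apply h2).mul h3
    · intro t
      have d1 := ((hasDerivAt_rot u e).const_smul (cos t)).add_const (sin t • v)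
      have d2 := ((hasDerivAt_rot u e).const_smul (-sin t)).add_const (cos t • v)
      have := (hasDerivAt_tensor F hF _ _ _ _ _ _ d1 (hasDerivAt_rot e (-u)) d2).mul_const
        (cos t ^ a * sin t ^ (b + 1))
      simpa using this
    · intro s
      apply mixed_moments F m hF hsymm hM _ v _ (rot_norm u e hu he hue _ _ (hneg s)) hv
        (rot_norm e (-u) he (by rwa [norm_neg]) (by rw [inner_neg_right, heu, neg_zero]) _ _ (hneg s))
        (inner_rot u v e huv hev _ _) _ _ a (b + 1) (by omega)
      · simp only [inner_add_left, inner_add_right, real_inner_smul_left, real_inner_smul_right,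
          inner_neg_right, huu, hee, hue, heu]
        ring
      · exact inner_rot' v e (-u) hve (by rw [inner_neg_right, hvu, neg_zero]) _ _
  have Iv : ∫ t in (0:ℝ)..π, (fderiv ℝ F (cos t • u + sin t • v) (sin t • e)
        e (-sin t • u + cos t • v)
      + F (cos t • u + sin t • v) (-v) (-sin t • u + cos t • v)
      + F (cos t • u + sin t • v) e (cos t • e))
      * (cos t ^ (a + 1) * sin t ^ b) = 0 := by
    apply param_deriv_zero (fun s t => F (cos t • u + sin t • (cos s • v + sin s • e))
      (cos s • e + sin s • (-v))
      (-sin t • u + cos t • (cos s • v + sin s • e)) * (cos t ^ (a + 1) * sin t ^ b))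
    · have h1 : ContDiff ℝ 1 (fun p : ℝ × ℝ => cos p.2 • u + sin p.2 • (cos p.1 • v + sin p.1 • e)) := by
        fun_prop
      have h2 : ContDiff ℝ 1 (fun p : ℝ × ℝ => -sin p.2 • u + cos p.2 • (cos p.1 • v + sin p.1 • e)) := by
        fun_prop
      have h4 : ContDiff ℝ 1 (fun p : ℝ × ℝ => cos p.1 • e + sin p.1 • (-v)) := by
        fun_prop
      have h3 : ContDiff ℝ 1 (fun p : ℝ × ℝ => cos p.2 ^ (a + 1) * sin p.2 ^ b) := by fun_prop
      exact (((hF.comp h1).clm_apply h4).clm_apply h2).mul h3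
    · intro t
      have d1 := ((hasDerivAt_rot v e).const_smul (sin t)).const_add (cos t • u)
      have d2 := ((hasDerivAt_rot v e).const_smul (cos t)).const_add (-sin t • u)
      have := (hasDerivAt_tensor F hF _ _ _ _ _ _ d1 (hasDerivAt_rot e (-v)) d2).mul_const
        (cos t ^ (a + 1) * sin t ^ b)
      simpa using this
    · intro s
      apply mixed_moments F m hF hsymm hM u _ _ hu (rot_norm v e hv he hve _ _ (hneg s))
        (rot_norm e (-v) he (by rwa [norm_neg]) (by rw [inner_neg_right, hev, neg_zero]) _ _ (hneg s))
        (inner_rot' u v e huv hue _ _) _ _ (a + 1) b (by omega)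
      · exact inner_rot' u e (-v) hue (by rw [inner_neg_right, huv, neg_zero]) _ _
      · simp only [inner_add_left, inner_add_right, real_inner_smul_left, real_inner_smul_right,
          inner_neg_right, hvv, hee, hve, hev]
        ring
  have J1 := hM u v hu hv huv (a + 2) b (by omega)
  have J2 := hM u v hu hv huv a (b + 2) (by omega)
  have H := int_add_zero _ _ (by fun_prop) (by fun_prop)
    (int_sub_zero _ _ (by fun_prop) (by fun_prop) Iv Iu)
    (int_add_zero _ _ (by fun_prop) (by fun_prop) J1 J2)
  rw [← H]
  congr 1
  funext t
  have hexp : F (cos t • u + sin t • v) (-sin t • u + cos t • v) (-sin t • u + cos t • v)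
      = -sin t * F (cos t • u + sin t • v) u (-sin t • u + cos t • v)
        + cos t * F (cos t • u + sin t • v) v (-sin t • u + cos t • v) := by
    rw [map_add, map_smul, map_smul, smul_eq_mul, smul_eq_mul, hsymm _ _ u, hsymm _ _ v]
  rw [hexp]
  generalize -sin t • u + cos t • v = γ'
  simp only [map_smul, map_neg, smul_apply, neg_apply, smul_eq_mul]
  generalize F (cos t • u + sin t • v) = B
  have hcs := sin_sq_add_cos_sq t
  linear_combination (-(cos t ^ a * sin t ^ b) * (B e e + cos t * B v γ' - sin t * B u γ')) * hcs

lemma component_moments (hF : ContDiff ℝ 1 F) (hsymm : ∀ x V W, F x V W = F x W V)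
    (hM : ∀ u v : E, ‖u‖ = 1 → ‖v‖ = 1 → ⟪u, v⟫ = 0 → ∀ a b : ℕ, a + b = m →
        ∫ t in (0:ℝ)..π,
          F (cos t • u + sin t • v) (-sin t • u + cos t • v) (-sin t • u + cos t • v)
            * (cos t ^ a * sin t ^ b) = 0)
    (u v w : E) (hu : ‖u‖ = 1) (hv : ‖v‖ = 1)
    (huv : ⟪u, v⟫ = 0) (a b : ℕ) (hab : a + b + 2 = m) :
    ∫ t in (0:ℝ)..π, F (cos t • u + sin t • v)
      (w - ⟪w, cos t • u + sin t • v⟫ • (cos t • u + sin t • v))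
      (w - ⟪w, cos t • u + sin t • v⟫ • (cos t • u + sin t • v)) * (cos t ^ a * sin t ^ b) = 0 := by
  have hFc := hF.continuous
  have huu : ⟪u, u⟫ = 1 := by rw [real_inner_self_eq_norm_sq, hu, one_pow]
  have hvv : ⟪v, v⟫ = 1 := by rw [real_inner_self_eq_norm_sq, hv, one_pow]
  have hvu : ⟪v, u⟫ = 0 := by rw [real_inner_comm]; exact huv
  set α := ⟪w, u⟫ with hα
  set β := ⟪w, v⟫ with hβ
  set e := w - α • u - β • v with he
  have hue : ⟪u, e⟫ = 0 := by
    simp only [he, inner_sub_right, real_inner_smul_right, huu, huv, real_inner_comm w u, ← hα]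
    ring
  have hve : ⟪v, e⟫ = 0 := by
    simp only [he, inner_sub_right, real_inner_smul_right, hvv, hvu, real_inner_comm w v, ← hβ]
    ring
  obtain ⟨r, e₁, he1, hre, hu1, hv1⟩ : ∃ (r : ℝ) (e₁ : E), e = r • e₁ ∧ (e = 0 ∨ ‖e₁‖ = 1) ∧
      ⟪u, e₁⟫ = 0 ∧ ⟪v, e₁⟫ = 0 := by
    by_cases h0 : e = 0
    · exact ⟨0, 0, by simp [h0], Or.inl h0, by simp, by simp⟩
    · have hne : ‖e‖ ≠ 0 := norm_ne_zero_iff.mpr h0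
      refine ⟨‖e‖, ‖e‖⁻¹ • e, ?_, Or.inr ?_, ?_, ?_⟩
      · rw [smul_smul, mul_inv_cancel₀ hne, one_smul]
      · rw [norm_smul, norm_inv, norm_norm, inv_mul_cancel₀ hne]
      · rw [real_inner_smul_right, hue, mul_zero]
      · rw [real_inner_smul_right, hve, mul_zero]
  have I1 : ∫ t in (0:ℝ)..π, F (cos t • u + sin t • v) e e * (cos t ^ a * sin t ^ b) = 0 := by
    rcases hre with h0 | h1
    · simp [h0]
    · have := normal_moments F m hF hsymm hM u v e₁ hu hv h1 huv hu1 hv1 a b hab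
      simp only [he1, map_smul, smul_apply, smul_eq_mul, mul_assoc,
        intervalIntegral.integral_const_mul, this, mul_zero]
  have I2 : ∀ a b : ℕ, a + b = m - 1 → ∫ t in (0:ℝ)..π, F (cos t • u + sin t • v) e
      (-sin t • u + cos t • v) * (cos t ^ a * sin t ^ b) = 0 := by
    intro a b hab'
    rcases hre with h0 | h1
    · simp [h0]
    · have := mixed_moments F m hF hsymm hM u v e₁ hu hv h1 huv hu1 hv1 a b (by omega)
      simp only [he1, map_smul, smul_apply, smul_eq_mul, mul_assoc,
        intervalIntegral.integral_const_mul, this, mul_zero]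
  have I2' := lin_moment (m - 1) (fun t => F (cos t • u + sin t • v) e (-sin t • u + cos t • v))
    (by fun_prop) I2 β (-α) 1 a b (by omega)
  have I3' := lin_moment m (fun t => F (cos t • u + sin t • v) (-sin t • u + cos t • v)
    (-sin t • u + cos t • v)) (by fun_prop) (hM u v hu hv huv) β (-α) 2 a b (by omega)
  have e0 : ∀ t : ℝ, F (cos t • u + sin t • v)
      (w - ⟪w, cos t • u + sin t • v⟫ • (cos t • u + sin t • v))
      (w - ⟪w, cos t • u + sin t • v⟫ • (cos t • u + sin t • v)) * (cos t ^ a * sin t ^ b)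
    = F (cos t • u + sin t • v) e e * (cos t ^ a * sin t ^ b)
     + 2 * (F (cos t • u + sin t • v) e (-sin t • u + cos t • v) *
        ((β * cos t + -α * sin t) ^ 1 * (cos t ^ a * sin t ^ b)))
     + F (cos t • u + sin t • v) (-sin t • u + cos t • v) (-sin t • u + cos t • v) *
        ((β * cos t + -α * sin t) ^ 2 * (cos t ^ a * sin t ^ b)) := by
    intro t
    have hw : w - ⟪w, cos t • u + sin t • v⟫ • (cos t • u + sin t • v)
        = e + (β * cos t + -α * sin t) • (-sin t • u + cos t • v) := by
      rw [inner_add_right, real_inner_smul_right, real_inner_smul_right, ← hα, ← hβ, he]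
      have hc : cos t ^ 2 = 1 - sin t ^ 2 := cos_sq' t
      have : w - (cos t * α + sin t * β) • (cos t • u + sin t • v) -
        (w - α • u - β • v + (β * cos t + -α * sin t) • (-sin t • u + cos t • v))
        = (α * (1 - sin t ^ 2 - cos t ^ 2)) • u + (β * (1 - sin t ^ 2 - cos t ^ 2)) • v := by
        module
      rw [← sub_eq_zero, this, hc]
      simp
    rw [hw]
    have hs := hsymm (cos t • u + sin t • v) (-sin t • u + cos t • v) e
    generalize -sin t • u + cos t • v = γ' at hs ⊢
    simp only [map_smul, map_add, smul_apply, add_apply,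
      smul_eq_mul, hs]
    ring
  simp only [e0]
  rw [intervalIntegral.integral_add (by apply Continuous.intervalIntegrable; fun_prop)
    (by apply Continuous.intervalIntegrable; fun_prop),
    intervalIntegral.integral_add (by apply Continuous.intervalIntegrable; fun_prop)
    (by apply Continuous.intervalIntegrable; fun_prop),
    intervalIntegral.integral_const_mul, I1, I2', I3']
  simp
end tensor

/-- Injectivity of the directionally dependent X-ray transform with weight
`(sin t)^m`, `m ≥ 3`, on tangential values of symmetric 2-cotensors on the unit
sphere (the case of Proposition 3.1 where the boundary is the unit sphere). -/
theorem tensor_vanishes_of_weighted_xray_vanishes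
    (n : ℕ) (hn : 3 ≤ n) (m : ℕ) (hm : 3 ≤ m)
    (F : EuclideanSpace ℝ (Fin n) →
      (EuclideanSpace ℝ (Fin n) →L[ℝ] EuclideanSpace ℝ (Fin n) →L[ℝ] ℝ))
    (hF : ContDiff ℝ (⊤ : ℕ∞) F)
    (hsymm : ∀ x V W, F x V W = F x W V)
    (h : ∀ u v : EuclideanSpace ℝ (Fin n), ‖u‖ = 1 → ‖v‖ = 1 → ⟪u, v⟫ = 0 →
      ∫ t in (0:ℝ)..π,
        F (Real.cos t • u + Real.sin t • v)
          (-Real.sin t • u + Real.cos t • v) (-Real.sin t • u + Real.cos t • v)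
          * Real.sin t ^ m = 0) :
    ∀ x V : EuclideanSpace ℝ (Fin n), ‖x‖ = 1 → ⟪x, V⟫ = 0 → F x V V = 0 := by
  intro x V hx hxV
  have hF1 : ContDiff ℝ 1 F := hF.of_le (by exact_mod_cast le_top)
  have hFc := hF1.continuous
  have hM := fun u v hu hv huv => (all_moments F m hF1 h u v hu hv huv).1
  have hP := fun u v hu hv huv => (all_moments F m hF1 h u v hu hv huv).2
  by_cases hV0 : V = 0
  · simp [hV0]
  have hne : ‖V‖ ≠ 0 := norm_ne_zero_iff.mpr hV0
  obtain ⟨a, hVa, ha, hxa⟩ : ∃ a : EuclideanSpace ℝ (Fin n), V = ‖V‖ • a ∧ ‖a‖ = 1 ∧ ⟪x, a⟫ = 0 := by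
    refine ⟨‖V‖⁻¹ • V, ?_, ?_, ?_⟩
    · rw [smul_smul, mul_inv_cancel₀ hne, one_smul]
    · rw [norm_smul, norm_inv, norm_norm, inv_mul_cancel₀ hne]
    · rw [real_inner_smul_right, hxV, mul_zero]
  obtain ⟨b, hb, hxb, hab⟩ : ∃ b : EuclideanSpace ℝ (Fin n), ‖b‖ = 1 ∧ ⟪x, b⟫ = 0 ∧ ⟪a, b⟫ = 0 := by
    let K : Submodule ℝ (EuclideanSpace ℝ (Fin n)) := Submodule.span ℝ {x, a}
    have hK : K ≠ ⊤ := by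
      intro hT
      have h1 : Module.finrank ℝ K ≤ 2 := by
        have := finrank_span_finset_le_card (R := ℝ) ({x, a} : Finset (EuclideanSpace ℝ (Fin n)))
        rw [Finset.coe_pair] at this
        exact this.trans Finset.card_le_two
      rw [hT, finrank_top, finrank_euclideanSpace_fin] at h1
      omega
    have hK' : Kᗮ ≠ ⊥ := fun hb => hK ((Submodule.orthogonal_eq_bot_iff).mp hb)
    obtain ⟨b, hbK, hb0⟩ := Submodule.exists_mem_ne_zero_of_ne_bot hK'
    rw [Submodule.mem_orthogonal] at hbK
    have hbn : ‖b‖ ≠ 0 := norm_ne_zero_iff.mpr hb0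
    refine ⟨‖b‖⁻¹ • b, ?_, ?_, ?_⟩
    · rw [norm_smul, norm_inv, norm_norm, inv_mul_cancel₀ hbn]
    · rw [real_inner_smul_right, hbK x (Submodule.subset_span (by simp)), mul_zero]
    · rw [real_inner_smul_right, hbK a (Submodule.subset_span (by simp)), mul_zero]
  have key := funk (fun y : EuclideanSpace ℝ (Fin n) =>
      F y (V - ⟪V, y⟫ • y) (V - ⟪V, y⟫ • y) * ⟪x, y⟫ ^ (m - 2)) (by fun_prop) (by
      intro u v hu hv huv
      have := lin_moment (m - 2) (fun t => F (cos t • u + sin t • v)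
        (V - ⟪V, cos t • u + sin t • v⟫ • (cos t • u + sin t • v))
        (V - ⟪V, cos t • u + sin t • v⟫ • (cos t • u + sin t • v))) (by fun_prop)
        (fun a b hab => component_moments F m hF1 hsymm hM u v V hu hv huv a b (by omega))
        ⟪x, u⟫ ⟪x, v⟫ (m - 2) 0 0 (by omega)
      rw [← this]
      congr 1
      funext t
      have hi : ⟪x, cos t • u + sin t • v⟫ = ⟪x, u⟫ * cos t + ⟪x, v⟫ * sin t := by
        rw [inner_add_right, real_inner_smul_right, real_inner_smul_right]
        ring
      rw [hi, pow_zero, pow_zero, mul_one, mul_one]) x a b hx ha hb hxa hxb hab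
  have hVx : ⟪V, x⟫ = 0 := by rw [real_inner_comm]; exact hxV
  have hxx : ⟪x, x⟫ = 1 := by rw [real_inner_self_eq_norm_sq, hx, one_pow]
  simp only [inner_neg_right, hVx, hxx, neg_zero, zero_smul, sub_zero, one_pow, mul_one] at key
  have hpar := hP x a hx ha hxa
  have hpar' : F (-x) V V * (-1) ^ m = F x V V := by
    rw [hVa]
    simp only [map_smul, smul_apply, smul_eq_mul]
    linear_combination ‖V‖ * ‖V‖ * hpar
  have hpow : (-1 : ℝ) ^ m = (-1) ^ (m - 2) := by
    conv_lhs => rw [show m = (m - 2) + 2 by omega, pow_add]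
    simp
  rw [hpow] at hpar'
  linarith
end

section
/- Let n ∈ ℕ with n ≥ 2, let k ∈ ℕ, let r > 0 be an irrational real number, and let F be a smooth symmetric 2-cotensor field on ℝ^n. For each orthonormal pair (u, v) in ℝ^n let γ(t) = r·cos(t/r)·u + r·sin(t/r)·v denote the corresponding unit-speed great circle on the sphere of radius r, with velocity γ'(t) = −sin(t/r)·u + cos(t/r)·v. Suppose that for every orthonormal pair (u, v) one has ∫₀^π F(γ(t))(γ'(t), γ'(t))·(sin t)^k dt = 0. Then F(x)(V, V) = 0 for every x ∈ ℝ^n with ‖x‖ = r and every V ∈ ℝ^n with ⟨x, V⟩ = 0. -/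
open Real intervalIntegral
open scoped RealInnerProductSpace

lemma aux_deriv_s12 (f : ℝ → ℝ) (hf : ContDiff ℝ (⊤ : ℕ∞) f) (w : ℝ → ℝ) (hw : Continuous w)
    (h : ∀ s, ∫ t in (0:ℝ)..π, f (s + t) * w t = 0) :
    ∀ s, ∫ t in (0:ℝ)..π, deriv f (s + t) * w t = 0 := by
  intro s
  have hfc : Continuous f := hf.continuous
  have hfd : Differentiable ℝ f := hf.differentiable (by simp)
  have hf' : Continuous (deriv f) := hf.continuous_deriv (by exact_mod_cast le_top)
  obtain ⟨C, hC⟩ := (isCompact_Icc (a := s - 1) (b := s + 1 + π)).exists_bound_of_continuousOn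
    hf'.continuousOn
  have key := intervalIntegral.hasDerivAt_integral_of_dominated_loc_of_deriv_le
    (μ := MeasureTheory.volume) (a := 0) (b := π)
    (F := fun s t => f (s + t) * w t) (F' := fun s t => deriv f (s + t) * w t) (x₀ := s)
    (s := Metric.ball s 1) (bound := fun t => C * ‖w t‖) (Metric.ball_mem_nhds s one_pos)
    (Filter.Eventually.of_forall fun x => by
      apply Continuous.aestronglyMeasurable; fun_prop)
    (by apply Continuous.intervalIntegrable; fun_prop)
    (by apply Continuous.aestronglyMeasurable; fun_prop)
    (Filter.Eventually.of_forall fun t ht x hx => by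
      rw [Set.uIoc_of_le pi_pos.le] at ht
      rw [Metric.mem_ball, Real.dist_eq, abs_lt] at hx
      rw [norm_mul]
      gcongr
      apply hC
      constructor <;> linarith [ht.1, ht.2, hx.1, hx.2])
    (by apply Continuous.intervalIntegrable; fun_prop)
    (Filter.Eventually.of_forall fun t ht x hx => by
      have h1 : HasDerivAt (fun x => f (x + t)) (deriv f (x + t)) x :=
        (hfd (x + t)).hasDerivAt.comp_add_const x t
      exact h1.mul_const (w t))
  have h2 := key.2
  simp only [h] at h2
  exact h2.unique (hasDerivAt_const s (0:ℝ))

lemma aux_green (f : ℝ → ℝ) (hf : ContDiff ℝ (⊤ : ℕ∞) f) (w w' w'' : ℝ → ℝ)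
    (hw : ∀ t, HasDerivAt w (w' t) t) (hw' : ∀ t, HasDerivAt w' (w'' t) t)
    (hc : Continuous w'')
    (h : ∀ s, ∫ t in (0:ℝ)..π, f (s + t) * w t = 0) (h0 : w 0 = 0) (hpi : w π = 0) (s : ℝ) :
    ∫ t in (0:ℝ)..π, f (s + t) * w'' t = f (s + π) * w' π - f s * w' 0 := by
  have hwc : Continuous w := continuous_iff_continuousAt.2 fun t => (hw t).continuousAt
  have hf1 : ContDiff ℝ (⊤ : ℕ∞) (deriv f) := (contDiff_infty_iff_deriv.1 hf).2
  have hf2 : ContDiff ℝ (⊤ : ℕ∞) (deriv (deriv f)) := (contDiff_infty_iff_deriv.1 hf1).2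
  have hI := aux_deriv_s12 _ hf1 w hwc (aux_deriv_s12 f hf w hwc h) s
  have c0 : Continuous f := hf.continuous
  have c2 : Continuous (deriv (deriv f)) := hf2.continuous
  have d0 : ∀ t, HasDerivAt (fun t => f (s + t)) (deriv f (s + t)) t := fun t =>
    ((hf.differentiable (by simp)) (s + t)).hasDerivAt.comp_const_add s t
  have d1 : ∀ t, HasDerivAt (fun t => deriv f (s + t)) (deriv (deriv f) (s + t)) t := fun t =>
    ((hf1.differentiable (by simp)) (s + t)).hasDerivAt.comp_const_add s t
  have i1 : IntervalIntegrable (fun t => deriv (deriv f) (s + t) * w t)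
    MeasureTheory.volume 0 π := by apply Continuous.intervalIntegrable; fun_prop
  have i2 : IntervalIntegrable (fun t => f (s + t) * w'' t)
    MeasureTheory.volume 0 π := by apply Continuous.intervalIntegrable; fun_prop
  have ftc := intervalIntegral.integral_eq_sub_of_hasDerivAt (a := 0) (b := π)
    (f := fun t => deriv f (s + t) * w t - f (s + t) * w' t)
    (f' := fun t => deriv (deriv f) (s + t) * w t - f (s + t) * w'' t)
    (fun t _ => (((d1 t).mul (hw t)).sub ((d0 t).mul (hw' t))).congr_deriv (by ring))
    (i1.sub i2)
  rw [intervalIntegral.integral_sub i1 i2, hI] at ftc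
  simp only [h0, hpi, add_zero] at ftc
  linarith

lemma aux_period (f : ℝ → ℝ) (hf : ContDiff ℝ (⊤ : ℕ∞) f) (k : ℕ)
    (h : ∀ s, ∫ t in (0:ℝ)..π, f (s + t) * Real.sin t ^ k = 0) (s : ℝ) :
    f (s + 2 * π) = f s := by
  have hs : s + 2 * π = (s + π) + π := by ring
  induction k using Nat.strong_induction_on with
  | _ k ih =>
    match k, ih, h with
    | 0, _, h =>
      have h' : ∀ s, f (s + π) = f s := by
        intro s
        have hI := aux_deriv_s12 f hf (fun t => Real.sin t ^ 0) (by fun_prop) h s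
        have ftc := intervalIntegral.integral_eq_sub_of_hasDerivAt (a := 0) (b := π)
          (f := fun t => f (s + t)) (f' := fun t => deriv f (s + t))
          (fun t _ => ((hf.differentiable (by simp)) (s + t)).hasDerivAt.comp_const_add s t)
          (by
            have : Continuous (deriv f) := hf.continuous_deriv (by exact_mod_cast le_top)
            apply Continuous.intervalIntegrable; fun_prop)
        simp only [pow_zero, mul_one] at hI
        rw [hI] at ftc
        simp only [add_zero] at ftc
        linarith
      rw [hs, h', h']
    | 1, _, h =>
      have h' : ∀ s, f (s + π) = - f s := by
        intro s
        have hg := aux_green f hf Real.sin Real.cos (fun t => - Real.sin t)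
          Real.hasDerivAt_sin Real.hasDerivAt_cos (by fun_prop) (by simpa using h)
          Real.sin_zero Real.sin_pi s
        have := h s
        simp only [pow_one] at this
        simp only [mul_neg, intervalIntegral.integral_neg, this, Real.cos_pi, Real.cos_zero] at hg
        linarith
      rw [hs, h', h', neg_neg]
    | m + 2, ih, h =>
      refine ih m (by omega) fun s => ?_
      have hg := aux_green f hf (fun t => Real.sin t ^ (m + 2))
        (fun t => (m + 2) * (Real.sin t ^ (m + 1) * Real.cos t))
        (fun t => ((m + 2) * (m + 1)) * Real.sin t ^ m - (m + 2) ^ 2 * Real.sin t ^ (m + 2))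
        (fun t => ((Real.hasDerivAt_sin t).pow (m + 2)).congr_deriv (by
          push_cast; ring_nf))
        (fun t => ((((Real.hasDerivAt_sin t).pow (m + 1)).mul
            (Real.hasDerivAt_cos t)).const_mul ((m : ℝ) + 2)).congr_deriv (by
          have hc : Real.cos t ^ 2 = 1 - Real.sin t ^ 2 := Real.cos_sq' t
          push_cast; simp only [Pi.pow_apply]
          linear_combination ((m:ℝ) + 2) * (m + 1) * Real.sin t ^ m * hc))
        (by fun_prop) h (by simp) (by simp) s
      have c0 : Continuous f := hf.continuous
      have e : ∀ t, f (s + t) * (((m + 2) * (m + 1)) * Real.sin t ^ m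
          - (m + 2) ^ 2 * Real.sin t ^ (m + 2)) =
          (((m:ℝ) + 2) * (m + 1)) * (f (s + t) * Real.sin t ^ m)
          - ((m:ℝ) + 2) ^ 2 * (f (s + t) * Real.sin t ^ (m + 2)) := fun t => by ring
      simp only [e] at hg
      rw [intervalIntegral.integral_sub (by apply Continuous.intervalIntegrable; fun_prop)
        (by apply Continuous.intervalIntegrable; fun_prop),
        intervalIntegral.integral_const_mul, intervalIntegral.integral_const_mul, h s] at hg
      simp only [Real.sin_pi, Real.sin_zero, ne_eq, Nat.add_eq_zero_iff, one_ne_zero, and_false,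
        not_false_eq_true, zero_pow, zero_mul, mul_zero, sub_zero] at hg
      have hm : ((m:ℝ) + 2) * (m + 1) ≠ 0 := by positivity
      exact (mul_eq_zero.1 hg).resolve_left hm

lemma aux_vanish (f : ℝ → ℝ) (hf : ContDiff ℝ (⊤ : ℕ∞) f) (k : ℕ) (r : ℝ) (hirr : Irrational r)
    (hp : ∀ s, f (s + 2 * π * r) = f s)
    (h : ∀ s, ∫ t in (0:ℝ)..π, f (s + t) * Real.sin t ^ k = 0) : f 0 = 0 := by
  have hp2 := aux_period f hf k h
  have hd : Dense (AddSubgroup.closure {2 * π * r, 2 * π} : Set ℝ) := by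
    rw [dense_addSubgroupClosure_pair_iff, mul_div_cancel_left₀ _ (by positivity)]
    exact hirr
  have hG : ∀ p ∈ AddSubgroup.closure {2 * π * r, 2 * π}, ∀ s, f (s + p) = f s := by
    intro p hp'
    induction hp' using AddSubgroup.closure_induction with
    | mem x hx =>
      rcases hx with rfl | rfl
      · exact hp
      · exact hp2
    | zero => simp
    | add x y _ _ hx hy => intro s; rw [← add_assoc, hy, hx]
    | neg x _ hx => intro s; rw [← hx (s + -x)]; simp
  have hconst : f = fun _ => f 0 := by
    refine Continuous.ext_on hd hf.continuous continuous_const fun p hp' => ?_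
    simpa using hG p hp' 0
  have h0 := h 0
  rw [hconst] at h0
  simp only [intervalIntegral.integral_const_mul] at h0
  exact (mul_eq_zero.1 h0).resolve_right (ne_of_gt (integral_sin_pow_pos k))

/-- The case of Proposition 3.1 where the boundary is a sphere of irrational
radius `r`: if the `(sin t)^k`-weighted X-ray transform of a smooth symmetric
2-cotensor field along the unit-speed great circles of the sphere of radius `r`
vanishes, then the tensor vanishes on tangent vectors to that sphere. -/
theorem tensor_vanishes_on_sphere_of_irrational_radius
    (n : ℕ) (hn : 2 ≤ n) (k : ℕ) (r : ℝ) (hr : 0 < r) (hirr : Irrational r)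
    (F : EuclideanSpace ℝ (Fin n) →
      (EuclideanSpace ℝ (Fin n) →L[ℝ] EuclideanSpace ℝ (Fin n) →L[ℝ] ℝ))
    (hF : ContDiff ℝ (⊤ : ℕ∞) F)
    (hsymm : ∀ x V W, F x V W = F x W V)
    (h : ∀ u v : EuclideanSpace ℝ (Fin n), ‖u‖ = 1 → ‖v‖ = 1 → ⟪u, v⟫ = 0 →
      ∫ t in (0:ℝ)..π,
        F ((r * Real.cos (t / r)) • u + (r * Real.sin (t / r)) • v)
          ((-Real.sin (t / r)) • u + Real.cos (t / r) • v)
          ((-Real.sin (t / r)) • u + Real.cos (t / r) • v)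
          * Real.sin t ^ k = 0) :
    ∀ x V : EuclideanSpace ℝ (Fin n), ‖x‖ = r → ⟪x, V⟫ = 0 → F x V V = 0 := by
  have main : ∀ u v : EuclideanSpace ℝ (Fin n), ‖u‖ = 1 → ‖v‖ = 1 → ⟪u, v⟫ = 0 →
      F (r • u) v v = 0 := by
    intro u v hu hv huv
    have hvu : ⟪v, u⟫ = 0 := by rw [real_inner_comm]; exact huv
    have huu : ⟪u, u⟫ = 1 := by rw [real_inner_self_eq_norm_sq, hu]; norm_num
    have hvv : ⟪v, v⟫ = 1 := by rw [real_inner_self_eq_norm_sq, hv]; norm_num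
    have := aux_vanish (fun t => F ((r * Real.cos (t / r)) • u + (r * Real.sin (t / r)) • v)
          ((-Real.sin (t / r)) • u + Real.cos (t / r) • v)
          ((-Real.sin (t / r)) • u + Real.cos (t / r) • v)) ?_ k r hirr ?_ ?_
    · simpa using this
    · have hsin : ContDiff ℝ (⊤ : ℕ∞) (fun t : ℝ => Real.sin (t / r)) :=
        Real.contDiff_sin.comp (contDiff_id.div_const r)
      have hcos : ContDiff ℝ (⊤ : ℕ∞) (fun t : ℝ => Real.cos (t / r)) :=
        Real.contDiff_cos.comp (contDiff_id.div_const r)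
      have hγ : ContDiff ℝ (⊤ : ℕ∞) (fun t : ℝ =>
          (r * Real.cos (t / r)) • u + (r * Real.sin (t / r)) • v) :=
        ((contDiff_const.mul hcos).smul contDiff_const).add
          ((contDiff_const.mul hsin).smul contDiff_const)
      have hγ' : ContDiff ℝ (⊤ : ℕ∞) (fun t : ℝ =>
          (-Real.sin (t / r)) • u + Real.cos (t / r) • v) :=
        (hsin.neg.smul contDiff_const).add (hcos.smul contDiff_const)
      exact ((hF.comp hγ).clm_apply hγ').clm_apply hγ'
    · intro s
      have e : (s + 2 * π * r) / r = s / r + 2 * π := by field_simp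
      simp only [e, Real.cos_add_two_pi, Real.sin_add_two_pi]
    · intro s
      have hcs := Real.sin_sq_add_cos_sq (s / r)
      have hn1 : ∀ a : EuclideanSpace ℝ (Fin n), ⟪a, a⟫ = 1 → ‖a‖ = 1 := by
        intro a ha
        rw [real_inner_self_eq_norm_sq] at ha
        exact (pow_eq_one_iff_of_nonneg (norm_nonneg a) two_ne_zero).1 ha
      have hs := h (Real.cos (s / r) • u + Real.sin (s / r) • v)
        ((-Real.sin (s / r)) • u + Real.cos (s / r) • v)
        (hn1 _ (by
          simp only [inner_add_left, inner_add_right, real_inner_smul_left,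
            real_inner_smul_right, huu, hvv, huv, hvu]
          linear_combination hcs))
        (hn1 _ (by
          simp only [inner_add_left, inner_add_right, real_inner_smul_left,
            real_inner_smul_right, huu, hvv, huv, hvu]
          linear_combination hcs))
        (by
          simp only [inner_add_left, inner_add_right, real_inner_smul_left,
            real_inner_smul_right, huu, hvv, huv, hvu]
          ring)
      rw [← hs]
      congr 1
      funext t
      have e1 : (r * Real.cos ((s + t) / r)) • u + (r * Real.sin ((s + t) / r)) • v =
          (r * Real.cos (t / r)) • (Real.cos (s / r) • u + Real.sin (s / r) • v) +
          (r * Real.sin (t / r)) • ((-Real.sin (s / r)) • u + Real.cos (s / r) • v) := by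
        rw [add_div, Real.cos_add, Real.sin_add]; module
      have e2 : (-Real.sin ((s + t) / r)) • u + Real.cos ((s + t) / r) • v =
          (-Real.sin (t / r)) • (Real.cos (s / r) • u + Real.sin (s / r) • v) +
          Real.cos (t / r) • ((-Real.sin (s / r)) • u + Real.cos (s / r) • v) := by
        rw [add_div, Real.cos_add, Real.sin_add]; module
      simp only [e1, e2]
  intro x V hx hxV
  by_cases hV : V = 0
  · simp [hV]
  have hV' : ‖V‖ ≠ 0 := norm_ne_zero_iff.2 hV
  have := main (r⁻¹ • x) (‖V‖⁻¹ • V)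
    (by rw [norm_smul, hx, norm_inv, Real.norm_of_nonneg hr.le, inv_mul_cancel₀ hr.ne'])
    (by rw [norm_smul, norm_inv, norm_norm, inv_mul_cancel₀ hV'])
    (by rw [real_inner_smul_left, real_inner_smul_right, hxV]; simp)
  rw [smul_inv_smul₀ hr.ne'] at this
  simpa [hV] using this
end
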